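/- Suppose Ideal(c_eq)+QM(c_in) is archimedean and Assumption A holds. If the LICQC, SCC and SOSC hold at every global minimizer of the problem (Q): minimize f_{θ*}(x) := f(x) − Σ_i θ*_i a_i(x) subject to x ∈ K, then there exists k1 ∈ ℕ such that for every k ≥ k1, every minimizer w of the kth moment relaxation has a flat truncation. -/

import Mathlib

open MvPolynomial MeasureTheory

noncomputable section

/-- The space of real polynomials in `n` variables. -/
abbrev RPoly (n : ℕ) : Type := MvPolynomial (Fin n) ℝ

/-- The degree `|α|` of a monomial power `α`. -/
def mdeg {n : ℕ} (α : Fin n →₀ ℕ) : ℕ := ∑ i, α i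

/-- `p` is a sum of squares of polynomials. -/
def IsSOS {n : ℕ} (p : RPoly n) : Prop :=
  ∃ L : List (RPoly n), p = (L.map (fun q => q ^ 2)).sum

/-- The truncation `QM(g)_k` of the quadratic module generated by `(g j)_{j ∈ S}`. -/
def QModDeg {n : ℕ} {κ : Type} (S : Finset κ) (g : κ → RPoly n) (k : ℕ) :
    Set (RPoly n) :=
  {p | ∃ σ0 : RPoly n, ∃ σ : κ → RPoly n,
      IsSOS σ0 ∧ σ0.totalDegree ≤ k ∧
      (∀ j ∈ S, IsSOS (σ j) ∧ (σ j).totalDegree + (g j).totalDegree ≤ k) ∧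
      p = σ0 + ∑ j ∈ S, g j * σ j}

/-- The truncation `Ideal(h)_k` of the ideal generated by `(h j)_{j ∈ S}`. -/
def IdealDeg {n : ℕ} {ι : Type} (S : Finset ι) (h : ι → RPoly n) (k : ℕ) :
    Set (RPoly n) :=
  {p | ∃ q : ι → RPoly n,
      (∀ j ∈ S, (q j).totalDegree + (h j).totalDegree ≤ k) ∧
      p = ∑ j ∈ S, h j * q j}

/-- The quadratic module `QM(g)` generated by `(g j)_{j ∈ S}`. -/
def QModFull {n : ℕ} {κ : Type} (S : Finset κ) (g : κ → RPoly n) : Set (RPoly n) :=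
  {p | ∃ σ0 : RPoly n, ∃ σ : κ → RPoly n,
      IsSOS σ0 ∧ (∀ j ∈ S, IsSOS (σ j)) ∧ p = σ0 + ∑ j ∈ S, g j * σ j}

/-- The ideal `Ideal(h)` generated by `(h j)_{j ∈ S}`. -/
def IdealFull {n : ℕ} {ι : Type} (S : Finset ι) (h : ι → RPoly n) : Set (RPoly n) :=
  (Ideal.span (h '' (S : Set ι)) : Ideal (RPoly n))

/-- `Ideal(c_eq) + QM(c_in)` is archimedean. -/
def ArchimedeanQM {n : ℕ} (E I : Finset ℕ) (c : ℕ → RPoly n) : Prop :=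
  ∃ R : ℝ, 0 < R ∧ ∃ p1 ∈ IdealFull E c, ∃ p2 ∈ QModFull I c,
    (C R : RPoly n) - ∑ i, (X i : RPoly n) ^ 2 = p1 + p2

/-- The basic closed semialgebraic set `K`. -/
def Kset {n : ℕ} (E I : Finset ℕ) (c : ℕ → RPoly n) : Set (Fin n → ℝ) :=
  {x | (∀ j ∈ E, eval x (c j) = 0) ∧ (∀ j ∈ I, 0 ≤ eval x (c j))}

/-- The bilinear pairing `⟨p, y⟩ = ∑_α p_α y_α`. -/
def pairing {n : ℕ} (p : RPoly n) (y : (Fin n →₀ ℕ) → ℝ) : ℝ :=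
  ∑ α ∈ p.support, p.coeff α * y α

/-- Membership in the moment cone `ℛ_d(K)`: the entries `y_α`, `|α| ≤ d`, are the
moments of a finite Borel measure supported in the closed set `K`. -/
def InMomentCone {n : ℕ} (d : ℕ) (K : Set (Fin n → ℝ)) (y : (Fin n →₀ ℕ) → ℝ) : Prop :=
  ∃ μ : Measure (Fin n → ℝ), IsFiniteMeasure μ ∧ μ Kᶜ = 0 ∧
    ∀ α : Fin n →₀ ℕ, mdeg α ≤ d →
      Integrable (fun x => ∏ i, x i ^ α i) μ ∧
      y α = ∫ x, (∏ i, x i ^ α i) ∂μ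

/-- The cone `P_d(K)` of polynomials of degree at most `d` that are nonnegative on `K`. -/
def PdCone {n : ℕ} (d : ℕ) (K : Set (Fin n → ℝ)) : Set (RPoly n) :=
  {p | p.totalDegree ≤ d ∧ ∀ x ∈ K, 0 ≤ eval x p}

/-- The interior of `P_d(K)` in the coefficient topology of `ℝ[x]_d`. -/
def PdInterior {n : ℕ} (d : ℕ) (K : Set (Fin n → ℝ)) : Set (RPoly n) :=
  {p | p.totalDegree ≤ d ∧ ∃ ε : ℝ, 0 < ε ∧ ∀ q : RPoly n, q.totalDegree ≤ d →
      (∀ α : Fin n →₀ ℕ, |q.coeff α - p.coeff α| ≤ ε) → ∀ x ∈ K, 0 ≤ eval x q}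

instance degLEFintype (n t : ℕ) : Fintype {α : Fin n →₀ ℕ // mdeg α ≤ t} := by
  apply Fintype.ofInjective
    (fun a : {α : Fin n →₀ ℕ // mdeg α ≤ t} =>
      (fun i => (⟨a.1 i, by
        have h1 : a.1 i ≤ mdeg a.1 :=
          Finset.single_le_sum (fun j _ => Nat.zero_le _) (Finset.mem_univ i)
        exact Nat.lt_succ_of_le (le_trans h1 a.2)⟩ : Fin (t + 1))) :
        {α : Fin n →₀ ℕ // mdeg α ≤ t} → (Fin n → Fin (t + 1)))
  intro a b hab
  apply Subtype.ext
  ext i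
  exact congrArg Fin.val (congrFun hab i)

/-- The moment matrix `M_t[w]`, indexed by monomial powers of degree at most `t`. -/
def momentMatrix {n : ℕ} (t : ℕ) (w : (Fin n →₀ ℕ) → ℝ) :
    Matrix {α : Fin n →₀ ℕ // mdeg α ≤ t} {α : Fin n →₀ ℕ // mdeg α ≤ t} ℝ :=
  fun α β => w (α.1 + β.1)

/-- `w` admits a flat truncation: for some `d0 ≤ t ≤ k`,
`rank M_{t-dK}[w] = rank M_t[w]`. -/
def HasFlatTruncation {n : ℕ} (d0 dK k : ℕ) (w : (Fin n →₀ ℕ) → ℝ) : Prop :=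
  ∃ t : ℕ, d0 ≤ t ∧ t ≤ k ∧
    (momentMatrix (t - dK) w).rank = (momentMatrix t w).rank

/-- The gradient of a polynomial at a point. -/
def gradP {n : ℕ} (p : RPoly n) (u : Fin n → ℝ) : Fin n → ℝ :=
  fun i => eval u (pderiv i p)

/-- The Hessian of a polynomial at a point. -/
def hessP {n : ℕ} (p : RPoly n) (u : Fin n → ℝ) : Fin n → Fin n → ℝ :=
  fun i j => eval u (pderiv i (pderiv j p))

/-- The classical optimality conditions (LICQC, KKT with SCC and SOSC) at the point `u`
for the problem: minimize `F` subject to `ge j = 0` (`j ∈ Es`), `gi j ≥ 0` (`j ∈ Is`). -/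
def OptCondsAt {n : ℕ} {ι κ : Type}
    (Es : Finset ι) (ge : ι → RPoly n) (Is : Finset κ) (gi : κ → RPoly n)
    (F : RPoly n) (u : Fin n → ℝ) : Prop :=
  -- LICQC: gradients of active constraints are linearly independent
  LinearIndependent ℝ
    (Sum.elim
      (fun j : {j : ι // j ∈ Es ∧ eval u (ge j) = 0} => gradP (ge j.1) u)
      (fun j : {j : κ // j ∈ Is ∧ eval u (gi j) = 0} => gradP (gi j.1) u)) ∧
  ∃ (lamE : ι → ℝ) (lamI : κ → ℝ),
    -- KKT stationarity
    (gradP F u =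
      (∑ j ∈ Es, lamE j • gradP (ge j) u) + ∑ j ∈ Is, lamI j • gradP (gi j) u) ∧
    (∀ j ∈ Is, 0 ≤ lamI j ∧ lamI j * eval u (gi j) = 0) ∧
    -- SCC
    (∀ j ∈ Is, 0 < lamI j + eval u (gi j)) ∧
    -- SOSC
    (∀ v : Fin n → ℝ, v ≠ 0 →
      (∀ j ∈ Es, (∑ i, v i * gradP (ge j) u i) = 0) →
      (∀ j ∈ Is, eval u (gi j) = 0 → (∑ i, v i * gradP (gi j) u i) = 0) →
      0 < ∑ i, ∑ i', v i *
        ((hessP F u i i' - ∑ j ∈ Es, lamE j * hessP (ge j) u i i')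
          - ∑ j ∈ Is, lamI j * hessP (gi j) u i i') * v i')

/-- The degree-`ℓ` homogenization `x_0^ℓ p(x/x_0)` of `p`; the new variable `x_0`
is the variable of index `0` in `Fin (n+1)`. -/
def homogAux {n : ℕ} (ℓ : ℕ) (p : RPoly n) : RPoly (n + 1) :=
  ∑ α ∈ p.support,
    monomial
      (Finsupp.single (0 : Fin (n + 1)) (ℓ - mdeg α) + Finsupp.mapDomain Fin.succ α)
      (p.coeff α)

/-- The homogenization `p̃` of `p`. -/
def homogenize {n : ℕ} (p : RPoly n) : RPoly (n + 1) := homogAux p.totalDegree p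

/-- The polynomial `‖x̃‖² - 1`. -/
def sphereP (n : ℕ) : RPoly (n + 1) := (∑ i, (X i : RPoly (n + 1)) ^ 2) - 1

/-- The homogenization `K̃` of the set `K`. -/
def Khom {n : ℕ} (E I : Finset ℕ) (c : ℕ → RPoly n) : Set (Fin (n + 1) → ℝ) :=
  {x | (∀ j ∈ E, eval x (homogenize (c j)) = 0) ∧
       (∀ j ∈ I, 0 ≤ eval x (homogenize (c j))) ∧
       (∑ i, (x i) ^ 2) = 1 ∧ 0 ≤ x 0}

/-- `K` is closed at infinity. -/
def ClosedAtInfinity {n : ℕ} (E I : Finset ℕ) (c : ℕ → RPoly n) : Prop :=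
  Khom E I c = closure (Khom E I c ∩ {x | 0 < x 0})

/-- The tuple `c̃_eq`: the homogenizations `c̃_j` together with `‖x̃‖² - 1`
(the latter indexed by `none`). -/
def gEqH {n : ℕ} (c : ℕ → RPoly n) : Option ℕ → RPoly (n + 1) :=
  fun o => o.elim (sphereP n) (fun j => homogenize (c j))

/-- The tuple `c̃_in`: the homogenizations `c̃_j` together with `x_0`
(the latter indexed by `none`). -/
def gInH {n : ℕ} (c : ℕ → RPoly n) : Option ℕ → RPoly (n + 1) :=
  fun o => o.elim (X 0) (fun j => homogenize (c j))

/-- The index set of a tuple extended by one extra entry (indexed by `none`). -/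
def OS (S : Finset ℕ) : Finset (Option ℕ) := insert none (S.image some)

/-- Feasibility of `θ` for the linear conic problem (P). -/
def PFeas {n m : ℕ} (m1 d : ℕ) (f : RPoly n) (a : Fin m → RPoly n)
    (K : Set (Fin n → ℝ)) (θ : Fin m → ℝ) : Prop :=
  (∀ i : Fin m, m1 ≤ (i : ℕ) → 0 ≤ θ i) ∧ (f - ∑ i, C (θ i) * a i) ∈ PdCone d K

/-- The optimal value `ϑ*` of the linear conic problem (P). -/
def PVal {n m : ℕ} (m1 d : ℕ) (f : RPoly n) (a : Fin m → RPoly n) (b : Fin m → ℝ)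
    (K : Set (Fin n → ℝ)) : ℝ :=
  sSup {v : ℝ | ∃ θ : Fin m → ℝ, PFeas m1 d f a K θ ∧ v = ∑ i, b i * θ i}

/-- Feasibility of `y` for the generalized moment problem (M). -/
def MFeas {n m : ℕ} (m1 d : ℕ) (a : Fin m → RPoly n) (b : Fin m → ℝ)
    (K : Set (Fin n → ℝ)) (y : (Fin n →₀ ℕ) → ℝ) : Prop :=
  InMomentCone d K y ∧
  (∀ i : Fin m, (i : ℕ) < m1 → pairing (a i) y = b i) ∧
  (∀ i : Fin m, m1 ≤ (i : ℕ) → b i ≤ pairing (a i) y)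

/-- The optimal value `φ*` of the generalized moment problem (M). -/
def MVal {n m : ℕ} (m1 d : ℕ) (f : RPoly n) (a : Fin m → RPoly n) (b : Fin m → ℝ)
    (K : Set (Fin n → ℝ)) : ℝ :=
  sInf {v : ℝ | ∃ y : (Fin n →₀ ℕ) → ℝ, MFeas m1 d a b K y ∧ v = pairing f y}

/-- The optimal value `ϑ_k` of the `k`th SOS relaxation of (P). -/
def SOSRelaxVal {n m : ℕ} {ι κ : Type} (m1 : ℕ) (f : RPoly n) (a : Fin m → RPoly n)
    (b : Fin m → ℝ) (Es : Finset ι) (ge : ι → RPoly n) (Is : Finset κ) (gi : κ → RPoly n)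
    (k : ℕ) : ℝ :=
  sSup {v : ℝ | ∃ θ : Fin m → ℝ, (∀ i : Fin m, m1 ≤ (i : ℕ) → 0 ≤ θ i) ∧
      (∃ p1 ∈ IdealDeg Es ge (2 * k), ∃ p2 ∈ QModDeg Is gi (2 * k),
        f - ∑ i, C (θ i) * a i = p1 + p2) ∧
      v = ∑ i, b i * θ i}

/-- The semidefinite constraints of the `k`th moment relaxation:
the localizing vectors of the equality constraints vanish, and the localizing
matrices of the inequality constraints and the moment matrix are positive
semidefinite (stated equivalently via the associated quadratic forms). -/
def MomRelaxPSD {n : ℕ} {ι κ : Type} (Es : Finset ι) (ge : ι → RPoly n)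
    (Is : Finset κ) (gi : κ → RPoly n) (k : ℕ) (w : (Fin n →₀ ℕ) → ℝ) : Prop :=
  (∀ j ∈ Es, ∀ p : RPoly n, p.totalDegree + (ge j).totalDegree ≤ 2 * k →
      pairing (ge j * p) w = 0) ∧
  (∀ j ∈ Is, ∀ p : RPoly n, p.totalDegree + ((gi j).totalDegree + 1) / 2 ≤ k →
      0 ≤ pairing (gi j * p ^ 2) w) ∧
  (∀ p : RPoly n, p.totalDegree ≤ k → 0 ≤ pairing (p ^ 2) w)

/-- Feasibility of `w` for the `k`th moment relaxation of (M). -/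
def GMomFeas {n m : ℕ} {ι κ : Type} (m1 : ℕ) (a : Fin m → RPoly n) (b : Fin m → ℝ)
    (Es : Finset ι) (ge : ι → RPoly n) (Is : Finset κ) (gi : κ → RPoly n) (k : ℕ)
    (w : (Fin n →₀ ℕ) → ℝ) : Prop :=
  (∀ i : Fin m, (i : ℕ) < m1 → pairing (a i) w = b i) ∧
  (∀ i : Fin m, m1 ≤ (i : ℕ) → b i ≤ pairing (a i) w) ∧
  MomRelaxPSD Es ge Is gi k w

/-- The optimal value `φ_k` of the `k`th moment relaxation of (M). -/
def GMomVal {n m : ℕ} {ι κ : Type} (m1 : ℕ) (f : RPoly n) (a : Fin m → RPoly n)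
    (b : Fin m → ℝ) (Es : Finset ι) (ge : ι → RPoly n) (Is : Finset κ) (gi : κ → RPoly n)
    (k : ℕ) : ℝ :=
  sInf {v : ℝ | ∃ w : (Fin n →₀ ℕ) → ℝ,
      GMomFeas m1 a b Es ge Is gi k w ∧ v = pairing f w}

/-- The optimal value `f_k^den` of the `k`th order relaxation with denominators. -/
def DenRelaxVal {n : ℕ} (E I : Finset ℕ) (c : ℕ → RPoly n) (f : RPoly n) (d k : ℕ) : ℝ :=
  sSup {γ : ℝ | ∃ p1 ∈ IdealDeg E c (2 * k + d), ∃ p2 ∈ QModDeg I c (2 * k + d),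
      (1 + ∑ i, (X i : RPoly n) ^ 2) ^ k * (f - C γ) = p1 + p2}


/-- The degree bound `d_K = max_j ⌈deg(c_j)/2⌉`. -/
def dKOrig {n : ℕ} (E I : Finset ℕ) (c : ℕ → RPoly n) : ℕ :=
  (E ∪ I).sup fun j => ((c j).totalDegree + 1) / 2

/-- The degree bound `d_0` for the GMP relaxations. -/
def d0GMP {n m : ℕ} (f : RPoly n) (a : Fin m → RPoly n) (E I : Finset ℕ)
    (c : ℕ → RPoly n) : ℕ :=
  max ((f.totalDegree + 1) / 2)
    (max (dKOrig E I c) (Finset.univ.sup fun i : Fin m => ((a i).totalDegree + 1) / 2))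

/-- The degree bound `d̃_K` for the homogenized constraining tuples. -/
def dKHom {n : ℕ} (E I : Finset ℕ) (c : ℕ → RPoly n) : ℕ :=
  max ((OS E).sup fun o => ((gEqH c o).totalDegree + 1) / 2)
      ((OS I).sup fun o => ((gInH c o).totalDegree + 1) / 2)

end

section PartA1
open MvPolynomial

theorem riesz_unit {W : Type*} [AddCommGroup W] [Module ℝ W] (s : Set W) (h0 : (0:W) ∈ s)
    (hadd : ∀ x ∈ s, ∀ y ∈ s, x + y ∈ s) (hsmul : ∀ r : ℝ, 0 ≤ r → ∀ x ∈ s, r • x ∈ s)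
    (e : W) (he : -e ∉ s) (hd : ∀ y : W, ∃ t : ℝ, t • e + y ∈ s) :
    ∃ g : W →ₗ[ℝ] ℝ, g e = 1 ∧ ∀ x ∈ s, 0 ≤ g x := by
  have hne : e ≠ 0 := by
    rintro rfl
    exact he (by simpa using h0)
  let P : PointedCone ℝ W :=
    { carrier := s
      add_mem' := fun {x y} hx hy => hadd x hx y hy
      zero_mem' := h0
      smul_mem' := fun r x hx => hsmul r.1 r.2 x hx }
  obtain ⟨g, hg1, hg2⟩ := riesz_extension P (LinearPMap.mkSpanSingleton (K := ℝ) e (1:ℝ) hne) (by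
      rintro ⟨x, hx⟩ hxs
      obtain ⟨t, rfl⟩ := Submodule.mem_span_singleton.1 hx
      erw [LinearPMap.mkSpanSingleton'_apply]
      by_contra hneg
      have ht : t < 0 := by simpa using hneg
      apply he
      have h2 := hsmul (-t)⁻¹ (by rw [inv_nonneg]; linarith) _ hxs
      have h3 : (-t)⁻¹ • (t • e) = -e := by
        rw [smul_smul, inv_neg, neg_mul, inv_mul_cancel₀ ht.ne, neg_one_smul]
      rw [← h3]; exact h2) (by
      intro y
      obtain ⟨t, ht⟩ := hd y
      exact ⟨⟨t • e, Submodule.mem_span_singleton.2 ⟨t, rfl⟩⟩, ht⟩)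
  refine ⟨g, ?_, hg2⟩
  have := hg1 ⟨e, Submodule.mem_span_singleton_self e⟩
  rw [this]
  exact LinearPMap.mkSpanSingleton_apply ℝ ℝ hne (1:ℝ)

/-- log-convex sequence with bounded exponential growth -/
theorem logconvex_growth (a : ℕ → ℝ) (ha : ∀ j, 0 ≤ a j)
    (hlc : ∀ j, a (j+1) ^ 2 ≤ a j * a (j+2)) (R N : ℝ) (hR : 0 < R)
    (hg : ∀ j, a j ≤ N * R ^ j) : a 1 ≤ R * a 0 := by
  by_contra hcon
  push Not at hcon
  have h0 : 0 < a 0 := by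
    rcases (ha 0).lt_or_eq with h | h
    · exact h
    · have := hlc 0
      simp only [← h] at this hcon
      nlinarith
  set r := a 1 / a 0 with hr
  have hr1 : R < r := by rw [hr, lt_div_iff₀ h0]; exact hcon
  have hrpos : 0 < r := hR.trans hr1
  have key : ∀ j, 0 < a j ∧ r * a j ≤ a (j+1) := by
    intro j
    induction j with
    | zero => exact ⟨h0, by rw [hr]; field_simp; exact le_rfl⟩
    | succ j ih =>
      have hp : 0 < a (j+1) := lt_of_lt_of_le (mul_pos hrpos ih.1) ih.2
      refine ⟨hp, ?_⟩
      have h1 := hlc j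
      have : a j * (r * a (j+1)) ≤ a j * a (j+2) := by
        calc a j * (r * a (j+1)) = (r * a j) * a (j+1) := by ring
          _ ≤ a (j+1) * a (j+1) := by gcongr; exact ih.2
          _ ≤ _ := by linarith [sq (a (j+1))]
      exact le_of_mul_le_mul_left this ih.1
  have hlow : ∀ j, a 0 * r ^ j ≤ a j := by
    intro j
    induction j with
    | zero => simp
    | succ j ih =>
      calc a 0 * r ^ (j+1) = r * (a 0 * r ^ j) := by ring
        _ ≤ r * a j := by gcongr
        _ ≤ _ := (key j).2
  have hq : 1 < r / R := by rwa [one_lt_div hR]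
  obtain ⟨j, hj⟩ := pow_unbounded_of_one_lt (N / a 0) hq
  have h1 := (hlow j).trans (hg j)
  rw [div_lt_iff₀ h0, div_pow, div_mul_eq_mul_div, lt_div_iff₀ (pow_pos hR j)] at hj
  linarith [mul_comm (r^j) (a 0)]
end PartA1


section PartA2
open MvPolynomial

def StateSet {n : ℕ} (V : Ideal (RPoly n)) (M : Set (RPoly n)) (u : V) : Set (V → ℝ) :=
  {L | (∀ p q, L (p + q) = L p + L q) ∧ (∀ (r : ℝ) p, L (r • p) = r * L p) ∧
    (∀ p : V, (p : RPoly n) ∈ M → 0 ≤ L p) ∧ L u = 1}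

section
variable {n : ℕ} {V : Ideal (RPoly n)} {M : Set (RPoly n)} {u : V}

theorem state_sub {L : V → ℝ} (hL : L ∈ StateSet V M u) (p q : V) : L (p - q) = L p - L q := by
  have h1 := hL.1 (p - q) q
  rw [sub_add_cancel] at h1
  linarith

theorem state_compact
    (hunit : ∀ p : V, ∃ N : ℝ, ((N • u - p : V) : RPoly n) ∈ M) :
    IsCompact (StateSet V M u) := by
  choose N hN using hunit
  have hbox : IsCompact (Set.pi Set.univ (fun p : V => Set.Icc (-(N (-p))) (N p))) :=
    isCompact_univ_pi (fun p => isCompact_Icc)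
  refine hbox.of_isClosed_subset ?_ ?_
  · have e : StateSet V M u =
      (⋂ (p : V) (q : V), {L : V → ℝ | L (p + q) = L p + L q}) ∩
      ((⋂ (r : ℝ) (p : V), {L : V → ℝ | L (r • p) = r * L p}) ∩
      ((⋂ (p : V) (_ : (p : RPoly n) ∈ M), {L : V → ℝ | 0 ≤ L p}) ∩ {L : V → ℝ | L u = 1})) := by
      ext L
      simp [StateSet]
    rw [e]
    refine IsClosed.inter ?_ (IsClosed.inter ?_ (IsClosed.inter ?_ ?_))
    · exact isClosed_iInter fun p => isClosed_iInter fun q =>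
        isClosed_eq (continuous_apply _) ((continuous_apply p).fun_add (continuous_apply q))
    · exact isClosed_iInter fun r => isClosed_iInter fun q =>
        isClosed_eq (continuous_apply _) (continuous_const.mul (continuous_apply _))
    · exact isClosed_iInter fun r => isClosed_iInter fun q =>
        isClosed_le continuous_const (continuous_apply _)
    · exact isClosed_eq (continuous_apply _) continuous_const
  · intro L hL p _
    have h1 := hL.2.2.1 _ (hN p)
    have h2 := hL.2.2.1 _ (hN (-p))
    rw [state_sub hL, hL.2.1, hL.2.2.2] at h1 h2
    have h3 : L (-p) = - L p := by
      have h4 := hL.1 0 0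
      have h5 := state_sub hL 0 p
      rw [zero_sub] at h5
      rw [add_zero] at h4
      linarith
    constructor <;> linarith

/-- multiplication by `ρ ± x_i` preserves nonnegativity on `M`. -/
theorem state_mul_nonneg {L : V → ℝ} (hL : L ∈ StateSet V M u)
    (hsq : ∀ p ∈ M, ∀ q : RPoly n, q ^ 2 * p ∈ M)
    (hunit : ∀ p : V, ∃ N : ℝ, ((N • u - p : V) : RPoly n) ∈ M)
    (huM : (u : RPoly n) ∈ M)
    (R : ℝ) (hR : 0 < R) (y : RPoly n)
    (hRM : ∀ (q : RPoly n), q ^ 2 * ((C R - y ^ 2) * (u : RPoly n)) ∈ M)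
    (ρ : ℝ) (hρ : R ≤ ρ ^ 2) (hρ0 : 0 < ρ) (m : V) (hm : (m : RPoly n) ∈ M) :
    0 ≤ L ((C ρ + y) • m) := by
  have hCs : ∀ (r : ℝ) (p : V), L ((C r : RPoly n) • p) = r * L p := by
    intro r p
    rw [← hL.2.1]
    congr 1
    ext1
    simp [MvPolynomial.smul_eq_C_mul]
  have hpos : ∀ (p : V) (q : RPoly n), (p : RPoly n) ∈ M → 0 ≤ L (q ^ 2 • p) := by
    intro p q hp
    exact hL.2.2.1 _ (by simpa using hsq p hp q)
  -- growth for u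
  have hgu : ∀ j : ℕ, L (y ^ (2 * j) • u) ≤ R ^ j := by
    intro j
    induction j with
    | zero => simp [hL.2.2.2]
    | succ j ih =>
      have h1 : 0 ≤ L ((y ^ j) ^ 2 • ((C R - y ^ 2) • u)) := hL.2.2.1 _ (by simpa using hRM (y ^ j))
      have h2 : (y ^ j) ^ 2 • ((C R - y ^ 2) • u) = (C R : RPoly n) • (y ^ (2 * j) • u) - y ^ (2 * (j + 1)) • u := by
        ext1
        simp only [Submodule.coe_smul, Submodule.coe_sub, smul_eq_mul]
        ring
      rw [h2, state_sub hL, hCs] at h1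
      calc L (y ^ (2 * (j+1)) • u) ≤ R * L (y ^ (2 * j) • u) := by linarith
        _ ≤ R * R ^ j := by gcongr
        _ = _ := by ring
  obtain ⟨N, hN⟩ := hunit m
  have h0 : ∀ j, 0 ≤ L (y ^ (2 * j) • u) := by
    intro j
    have := hpos u (y ^ j) huM
    rwa [← pow_mul, mul_comm] at this
  have hlg := logconvex_growth (fun j => L (y ^ (2 * j) • m))
    (by
      intro j
      have := hpos m (y ^ j) hm
      rwa [← pow_mul, mul_comm] at this)
    (by
      intro j
      set A := L (y ^ (2 * j) • m)
      set B := L (y ^ (2 * (j+1)) • m)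
      set D := L (y ^ (2 * (j+2)) • m)
      have hA : ∀ s t : ℝ, 0 ≤ s ^ 2 * A + 2 * s * t * B + t ^ 2 * D := by
        intro s t
        have := hpos m (C s * y ^ j + C t * y ^ (j+2)) hm
        have e : (C s * y ^ j + C t * y ^ (j+2)) ^ 2 • m =
          (C (s^2) : RPoly n) • (y ^ (2 * j) • m) + ((C (2 * s * t) : RPoly n) • (y ^ (2 * (j+1)) • m)
          + (C (t^2) : RPoly n) • (y ^ (2 * (j+2)) • m)) := by
          ext1
          simp only [Submodule.coe_smul, Submodule.coe_add, smul_eq_mul, C_mul, C_pow]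
          have : (C 2 : RPoly n) = 2 := rfl
          rw [this]
          ring
        rw [e, hL.1, hL.1, hCs, hCs, hCs] at this
        linarith
      show B ^ 2 ≤ A * D
      have h1 := hA D (-B)
      have hD0 : 0 ≤ D := by have := hA 0 1; simpa using this
      have hA0 : 0 ≤ A := by have := hA 1 0; simpa using this
      rcases hD0.lt_or_eq with h | h
      · have : 0 ≤ D * (A * D - B ^ 2) := by nlinarith
        have := nonneg_of_mul_nonneg_right this h
        linarith
      · rw [← h] at hA ⊢
        have hB : B = 0 := by
          by_contra hB
          have := hA 1 (-(A + 1) / (2 * B))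
          have e : 2 * 1 * (-(A + 1) / (2 * B)) * B = -(A + 1) := by field_simp
          rw [e] at this
          linarith
        simp [hB])
    R |N| hR (by
      intro j
      have := hpos _ (y ^ j) hN
      have e : (y ^ j) ^ 2 • (N • u - m) = (C N : RPoly n) • (y ^ (2 * j) • u) - y ^ (2 * j) • m := by
        ext1
        simp only [Submodule.coe_smul, Submodule.coe_sub, smul_eq_mul, Submodule.coe_smul_of_tower,
          MvPolynomial.smul_eq_C_mul]
        ring
      rw [e, state_sub hL, hCs] at this
      calc L (y ^ (2 * j) • m) ≤ N * L (y ^ (2 * j) • u) := by linarith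
        _ ≤ |N| * L (y ^ (2 * j) • u) := by gcongr; exact h0 j; exact le_abs_self N
        _ ≤ |N| * R ^ j := by gcongr; exact hgu j)
  simp only [mul_one, mul_zero, pow_zero, one_smul] at hlg
  have h1 := hpos m (C ρ + y) hm
  have hm0 := hL.2.2.1 m hm
  have e : (C (2 * ρ) : RPoly n) • ((C ρ + y) • m) = (C ρ + y) ^ 2 • m + ((C (ρ^2) : RPoly n) • m - y ^ 2 • m) := by
    ext1
    simp only [Submodule.coe_smul, Submodule.coe_sub, Submodule.coe_add, smul_eq_mul, C_mul, C_pow]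
    have : (C 2 : RPoly n) = 2 := rfl
    rw [this]
    ring
  have h2 := hCs (2 * ρ) ((C ρ + y) • m)
  rw [e, hL.1, state_sub hL, hCs] at h2
  have h3 : R * L m ≤ ρ ^ 2 * L m := by gcongr
  have : 0 ≤ 2 * ρ * L ((C ρ + y) • m) := by linarith
  exact nonneg_of_mul_nonneg_right this (by linarith)
end
end PartA2


section PartA3
open MvPolynomial

section
variable {n : ℕ} {V : Ideal (RPoly n)} {M : Set (RPoly n)} {u : V}

theorem extreme_mult {L : V → ℝ} (hL : L ∈ (StateSet V M u).extremePoints ℝ)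
    (hsq : ∀ p ∈ M, ∀ q : RPoly n, q ^ 2 * p ∈ M)
    (hunit : ∀ p : V, ∃ N : ℝ, ((N • u - p : V) : RPoly n) ∈ M)
    (huM : (u : RPoly n) ∈ M)
    (R : ℝ) (hR : 0 < R) (y : RPoly n)
    (hRM : ∀ (q : RPoly n), q ^ 2 * ((C R - y ^ 2) * (u : RPoly n)) ∈ M) :
    ∃ t : ℝ, ∀ p : V, L (y • p) = t * L p := by
  have hS := hL.1
  have hCs : ∀ (r : ℝ) (p : V), L ((C r : RPoly n) • p) = r * L p := by
    intro r p
    rw [← hS.2.1]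
    congr 1
    ext1
    simp [MvPolynomial.smul_eq_C_mul]
  have hyn : ∀ p : V, L ((-y) • p) = - L (y • p) := by
    intro p
    have h1 := hS.1 ((-y) • p) (y • p)
    have h2 : (-y) • p + y • p = (C 0 : RPoly n) • p := by
      rw [← add_smul]; simp
    rw [h2, hCs] at h1
    linarith
  have hsplit : ∀ (r : ℝ) (z : RPoly n) (p : V), L ((C r + z) • p) = r * L p + L (z • p) := by
    intro r z p
    rw [add_smul, hS.1, hCs]
  set ρ := R + 1 with hρdef
  have hρ : R ≤ ρ ^ 2 := by nlinarith
  have hρ0 : 0 < ρ := by linarith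
  have hRM' : ∀ (q : RPoly n), q ^ 2 * ((C R - (-y) ^ 2) * (u : RPoly n)) ∈ M := by
    intro q; rw [neg_sq]; exact hRM q
  have hp := state_mul_nonneg hS hsq hunit huM R hR y hRM ρ hρ hρ0
  have hm := state_mul_nonneg hS hsq hunit huM R hR (-y) hRM' ρ hρ hρ0
  have hpu := hp u huM
  have hmu := hm u huM
  rw [hsplit, hS.2.2.2] at hpu hmu
  rw [hyn] at hmu
  set α := L (y • u) with hα
  set σ := ρ + 1 with hσ
  have ha : 0 < σ + α := by linarith
  have hb : 0 < σ - α := by linarith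
  have mem : ∀ (z : RPoly n) (b : ℝ), 0 < σ + b → L (z • u) = b →
      (∀ m : V, (m : RPoly n) ∈ M → 0 ≤ L ((C ρ + z) • m)) →
      (fun p => (σ + b)⁻¹ * L ((C σ + z) • p)) ∈ StateSet V M u := by
    intro z b hb hzu hz
    refine ⟨?_, ?_, ?_, ?_⟩
    · intro p q
      simp only [smul_add, hS.1]
      ring
    · intro r p
      simp only
      rw [smul_comm, hS.2.1]
      ring
    · intro p hpM
      have h1 := hz p hpM
      have h2 := hS.2.2.1 p hpM
      rw [hsplit] at h1
      refine mul_nonneg (inv_nonneg.2 hb.le) ?_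
      rw [hsplit]
      nlinarith
    · simp only
      rw [hsplit, hS.2.2.2, hzu, mul_one, inv_mul_cancel₀ hb.ne']
  have h1 := mem y α ha rfl hp
  have h2 := mem (-y) (-α) (by linarith) (hyn u) hm
  have hσ0 : 0 < σ := by linarith
  have h3 := hL.2 h1 h2 (by
    refine ⟨(σ + α) / (2 * σ), (σ - α) / (2 * σ), by positivity, by positivity, by rw [← add_div, div_eq_one_iff_eq (by positivity)]; ring, ?_⟩
    funext p
    simp only [Pi.add_apply, Pi.smul_apply, smul_eq_mul, hsplit, hyn]
    have : σ ≠ 0 := by positivity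
    have hb' : σ + -α ≠ 0 := by linarith
    have hb2 : σ + -α = σ - α := by ring
    rw [hb2]
    field_simp
    ring)
  refine ⟨α, fun p => ?_⟩
  have h4 := congrFun h3 p
  simp only [hsplit] at h4
  field_simp at h4
  linarith

theorem pure_state
    (hadd : ∀ p ∈ M, ∀ q ∈ M, p + q ∈ M) (h0 : (0 : RPoly n) ∈ M)
    (hsq : ∀ p ∈ M, ∀ q : RPoly n, q ^ 2 * p ∈ M)
    (hunit : ∀ p : V, ∃ N : ℝ, ((N • u - p : V) : RPoly n) ∈ M)
    (huM : (u : RPoly n) ∈ M)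
    (R : ℝ) (hR : 0 < R)
    (hRM : ∀ i, ∀ (q : RPoly n), q ^ 2 * ((C R - X i ^ 2) * (u : RPoly n)) ∈ M)
    (G : V)
    (hpos : ∀ (L : V →ₗ[ℝ] ℝ) (z : Fin n → ℝ), (∀ p : V, (p : RPoly n) ∈ M → 0 ≤ L p) →
      L u = 1 → (∀ (f : RPoly n) (p : V), L (f • p) = eval z f * L p) → 0 < L G) :
    ∃ ε : ℝ, 0 < ε ∧ ((G - ε • u : V) : RPoly n) ∈ M := by
  have hsm : ∀ r : ℝ, 0 ≤ r → ∀ p ∈ M, r • p ∈ M := by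
    intro r hr p hp
    have := hsq p hp (C (Real.sqrt r))
    rwa [← C_pow, Real.sq_sqrt hr, ← MvPolynomial.smul_eq_C_mul] at this
  by_contra hcon
  push Not at hcon
  -- cone
  let s : Set V := {p | ∃ t : ℝ, 0 ≤ t ∧ ((p + t • G : V) : RPoly n) ∈ M}
  obtain ⟨g, hg1, hg2⟩ := riesz_unit s ⟨0, le_rfl, by simpa using h0⟩ (by
      rintro x ⟨t, ht, hx⟩ y ⟨t', ht', hy⟩
      refine ⟨t + t', by positivity, ?_⟩
      have := hadd _ hx _ hy
      convert this using 1
      rw [← Submodule.coe_add]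
      congr 1
      module) (by
      rintro r hr x ⟨t, ht, hx⟩
      refine ⟨r * t, by positivity, ?_⟩
      have := hsm r hr _ hx
      convert this using 1
      rw [← Submodule.coe_smul_of_tower]
      congr 1
      module) u (by
      rintro ⟨t, ht, hx⟩
      rcases ht.lt_or_eq with h | h
      · refine hcon t⁻¹ (by positivity) ?_
        have := hsm t⁻¹ (by positivity) _ hx
        convert this using 1
        rw [← Submodule.coe_smul_of_tower]
        congr 1
        rw [smul_add, smul_smul, inv_mul_cancel₀ h.ne']
        module
      · subst h
        obtain ⟨N, hN⟩ := hunit (-G)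
        refine hcon 1 one_pos ?_
        have h5 := hsm |N+1| (abs_nonneg _) _ hx
        have h6 := hsm (|N+1| - (N+1)) (by linarith [le_abs_self (N+1)]) _ huM
        have := hadd _ (hadd _ h5 _ h6) _ hN
        convert this using 1
        rw [← Submodule.coe_smul_of_tower, ← Submodule.coe_smul_of_tower, ← Submodule.coe_add, ← Submodule.coe_add]
        congr 1
        module) (by
      intro y
      obtain ⟨N, hN⟩ := hunit (-y)
      refine ⟨N, 0, le_rfl, ?_⟩
      convert hN using 2
      module)
  have hgS : (g : V → ℝ) ∈ StateSet V M u :=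
    ⟨fun p q => map_add g p q, fun r p => by simp, fun p hp => hg2 p ⟨0, le_rfl, by simpa using hp⟩, hg1⟩
  have hgG : g G ≤ 0 := by
    have := hg2 (-G) ⟨1, zero_le_one, by simpa using h0⟩
    rw [map_neg] at this
    linarith
  let ev : StrongDual ℝ (V → ℝ) := -ContinuousLinearMap.proj (R := ℝ) (φ := fun _ : V => ℝ) G
  have hcomp := state_compact (V := V) (M := M) (u := u) hunit
  have hexp : IsExposed ℝ (StateSet V M u) (ev.toExposed (StateSet V M u)) := ContinuousLinearMap.toExposed.isExposed
  obtain ⟨L1, hL1, hL1m⟩ := hcomp.exists_isMaxOn ⟨_, hgS⟩ ev.continuous.continuousOn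
  obtain ⟨L0, hL0⟩ := (hexp.isCompact hcomp).extremePoints_nonempty
    ⟨L1, hL1, fun y hy => hL1m hy⟩
  have hL0S := hexp.isExtreme.extremePoints_subset_extremePoints hL0
  have hle : L0 G ≤ g G := by
    have := hL0.1.2 _ hgS
    simpa [ev] using this
  have hS := hL0S.1
  choose z hz using fun i => extreme_mult hL0S hsq hunit huM R hR (X i) (hRM i)
  let L : V →ₗ[ℝ] ℝ := { toFun := L0, map_add' := hS.1, map_smul' := fun r p => by simpa using hS.2.1 r p }
  have hCs : ∀ (r : ℝ) (p : V), L0 ((C r : RPoly n) • p) = r * L0 p := by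
    intro r p
    rw [← hS.2.1]
    congr 1
    ext1
    simp [MvPolynomial.smul_eq_C_mul]
  have := hpos L z hS.2.2.1 hS.2.2.2 (by
    intro f
    show ∀ p : V, L0 (f • p) = eval z f * L0 p
    induction f using MvPolynomial.induction_on with
    | C a => intro p; rw [hCs, eval_C]
    | add p q hp hq => intro r; rw [add_smul, hS.1, hp, hq, map_add]; ring
    | mul_X p i hp => intro r; rw [mul_smul, hp, hz, map_mul, eval_X]; ring)
  have h7 : 0 < L0 G := this
  linarith
end
end PartA3


section PartA4
open MvPolynomial

inductive Qm {n : ℕ} (E I : Finset ℕ) (c : ℕ → RPoly n) : RPoly n → Prop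
  | sq (p : RPoly n) : Qm E I c (p ^ 2)
  | ineq (j : ℕ) (hj : j ∈ I) (p : RPoly n) : Qm E I c (c j * p ^ 2)
  | eqn (j : ℕ) (hj : j ∈ E) (p : RPoly n) : Qm E I c (c j * p)
  | add (p q : RPoly n) (hp : Qm E I c p) (hq : Qm E I c q) : Qm E I c (p + q)

namespace Qm
variable {n : ℕ} {E I : Finset ℕ} {c : ℕ → RPoly n}

theorem mul_sq {p : RPoly n} (hp : Qm E I c p) (q : RPoly n) : Qm E I c (q ^ 2 * p) := by
  induction hp with
  | sq p => rw [← mul_pow]; exact sq _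
  | ineq j hj p =>
    have := ineq (E := E) (c := c) j hj (q * p)
    convert this using 1; ring
  | eqn j hj p =>
    have := eqn (I := I) (c := c) j hj (q ^ 2 * p)
    convert this using 1; ring
  | add p r _ _ h1 h2 => rw [mul_add]; exact add _ _ h1 h2

theorem zero : Qm E I c 0 := by simpa using sq (E := E) (I := I) (c := c) 0

theorem const {r : ℝ} (hr : 0 ≤ r) : Qm E I c (C r) := by
  have := sq (E := E) (I := I) (c := c) (C (Real.sqrt r))
  rwa [← C_pow, Real.sq_sqrt hr] at this

theorem smulC {p : RPoly n} (hp : Qm E I c p) {r : ℝ} (hr : 0 ≤ r) : Qm E I c (C r * p) := by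
  have := hp.mul_sq (C (Real.sqrt r))
  rwa [← C_pow, Real.sq_sqrt hr] at this

theorem sum {ι : Type*} (s : Finset ι) (g : ι → RPoly n) (h : ∀ i ∈ s, Qm E I c (g i)) :
    Qm E I c (∑ i ∈ s, g i) := by
  classical
  induction s using Finset.induction_on with
  | empty => simpa using zero
  | insert i s hi ih =>
    rw [Finset.sum_insert hi]
    exact add _ _ (h i (by simp)) (ih fun j hj => h j (by simp [hj]))

theorem sos {p : RPoly n} (hp : IsSOS p) {r : RPoly n} (hr : ∀ q, Qm E I c (r * q ^ 2)) :
    Qm E I c (r * p) := by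
  obtain ⟨L, rfl⟩ := hp
  induction L with
  | nil => simpa using zero
  | cons a L ih => simp only [List.map_cons, List.sum_cons, mul_add]; exact add _ _ (hr a) ih

theorem ideal {p : RPoly n} (hp : p ∈ IdealFull E c) : Qm E I c p := by
  have hp' : p ∈ Ideal.span (c '' (E : Set ℕ)) := hp
  clear hp
  suffices h : ∀ a : RPoly n, Qm E I c (a • p) by simpa using h 1
  induction hp' using Submodule.span_induction with
  | mem x hx =>
    intro a
    obtain ⟨j, hj, rfl⟩ := hx
    have := eqn (I := I) (c := c) j hj a
    rwa [mul_comm] at this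
  | zero => intro a; simpa using zero
  | add x y _ _ h1 h2 => intro a; rw [smul_add]; exact add _ _ (h1 a) (h2 a)
  | smul b x _ h => intro a; rw [smul_smul]; exact h _

theorem arch (h : ArchimedeanQM E I c) : ∃ R : ℝ, 0 < R ∧ Qm E I c (C R - ∑ i, X i ^ 2) := by
  obtain ⟨R, hR, p1, h1, p2, ⟨σ0, σ, h2, h3, rfl⟩, h4⟩ := h
  refine ⟨R, hR, ?_⟩
  rw [h4]
  refine add _ _ (ideal h1) (add _ _ ?_ (sum _ _ fun j hj => ?_))
  · have := sos (E := E) (I := I) (c := c) (r := 1) h2 (fun q => by simpa using sq q)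
    simpa using this
  · exact sos (h3 j hj) (fun q => ineq j hj q)

theorem arch_i {R : ℝ} (h : Qm E I c (C R - ∑ i, X i ^ 2)) (i : Fin n) :
    Qm E I c (C R - X i ^ 2) := by
  have h1 := sum (E := E) (I := I) (c := c) (Finset.univ.erase i) (fun j => (X j : RPoly n) ^ 2) (fun j _ => sq _)
  have := add _ _ h h1
  convert this using 1
  rw [← Finset.add_sum_erase _ _ (Finset.mem_univ i)]
  ring

theorem eval_nonneg {p : RPoly n} (hp : Qm E I c p) {x : Fin n → ℝ} (hx : x ∈ Kset E I c) :
    0 ≤ eval x p := by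
  induction hp with
  | sq p => rw [map_pow]; positivity
  | ineq j hj p => rw [map_mul, map_pow]; exact mul_nonneg (hx.2 j hj) (by positivity)
  | eqn j hj p => rw [map_mul, hx.1 j hj, zero_mul]
  | add p r _ _ h1 h2 => rw [map_add]; exact _root_.add_nonneg h1 h2

/-- bounded elements -/
def Bd (E I : Finset ℕ) (c : ℕ → RPoly n) (p : RPoly n) : Prop :=
  ∃ N : ℝ, 0 < N ∧ Qm E I c (C N - p) ∧ Qm E I c (C N + p)

theorem mono {p : RPoly n} {N N' : ℝ} (h : N ≤ N') (hp : Qm E I c (C N + p)) : Qm E I c (C N' + p) := by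
  have := add _ _ hp (const (E := E) (I := I) (c := c) (sub_nonneg.2 h))
  convert this using 1
  rw [C_sub]; ring

theorem Bd.add {p q : RPoly n} (hp : Bd E I c p) (hq : Bd E I c q) : Bd E I c (p + q) := by
  obtain ⟨N, hN, h1, h2⟩ := hp
  obtain ⟨N', hN', h3, h4⟩ := hq
  refine ⟨N + N', by positivity, ?_, ?_⟩
  · have := Qm.add _ _ h1 h3
    convert this using 1
    rw [C_add]; ring
  · have := Qm.add _ _ h2 h4
    convert this using 1
    rw [C_add]; ring

theorem Bd.neg {p : RPoly n} (hp : Bd E I c p) : Bd E I c (-p) := by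
  obtain ⟨N, hN, h1, h2⟩ := hp
  exact ⟨N, hN, by simpa using h2, by simpa [← sub_eq_add_neg] using h1⟩

theorem Bd.smul {p : RPoly n} (hp : Bd E I c p) {r : ℝ} (hr : 0 < r) : Bd E I c (C r * p) := by
  obtain ⟨N, hN, h1, h2⟩ := hp
  refine ⟨r * N, by positivity, ?_, ?_⟩
  · have := h1.smulC hr.le
    convert this using 1
    rw [C_mul]; ring
  · have := h2.smulC hr.le
    convert this using 1
    rw [C_mul]; ring

theorem Bd.sq {p : RPoly n} (hp : Bd E I c p) : Bd E I c (p ^ 2) := by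
  obtain ⟨N, hN, h1, h2⟩ := hp
  refine ⟨N ^ 2, by positivity, ?_, ?_⟩
  · have h3 := (Qm.add _ _ (h2.mul_sq (C N - p)) (h1.mul_sq (C N + p))).smulC (r := 1 / (2 * N)) (by positivity)
    convert h3 using 1
    have : (C (1 / (2 * N)) : RPoly n) * (C 2 * C N) = 1 := by
      rw [← C_mul, ← C_mul, one_div_mul_cancel (by positivity), C_1]
    rw [C_pow]
    have h2 : (C 2 : RPoly n) = 2 := map_ofNat C 2
    rw [h2] at this
    linear_combination (p ^ 2 - C N ^ 2) * this
  · exact Qm.add _ _ (const (by positivity)) (Qm.sq _)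

theorem Bd.of_sq {p : RPoly n} {R : ℝ} (hp : Qm E I c (C R - p ^ 2)) : Bd E I c p := by
  have key : ∀ q : RPoly n, Qm E I c (C R - q ^ 2) → Qm E I c (C (|R| + 1) - q) := by
    intro q hq
    have h1 := Qm.add _ _ hq (Qm.sq (E := E) (I := I) (c := c) (q - C (1/2)))
    have h2 := Qm.mono (N := R + 1/4) (N' := |R| + 1) (p := - q) (by linarith [le_abs_self R]) (by
      convert h1 using 1
      have e1 : (C (1/2) : RPoly n) * 2 = 1 := by
        rw [show (2 : RPoly n) = C 2 from (map_ofNat C 2).symm, ← C_mul]; norm_num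
      have e2 : (C (1/4) : RPoly n) = C (1/2) ^ 2 := by rw [← C_pow]; norm_num
      rw [C_add, e2]
      linear_combination q * e1)
    rwa [← sub_eq_add_neg] at h2
  refine ⟨|R| + 1, by positivity, key p hp, ?_⟩
  have := key (-p) (by simpa using hp)
  simpa using this

theorem bdd {R : ℝ} (h : Qm E I c (C R - ∑ i, X i ^ 2)) (p : RPoly n) : Bd E I c p := by
  induction p using MvPolynomial.induction_on with
  | C a =>
    refine ⟨|a| + 1, by positivity, ?_, ?_⟩
    · rw [← C_sub]; exact const (by linarith [le_abs_self a])
    · rw [← C_add]; exact const (by linarith [neg_abs_le a])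
  | add p q hp hq => exact hp.add hq
  | mul_X p i hp =>
    have hX : Bd E I c (X i) := Bd.of_sq (h.arch_i i)
    have := ((hp.add hX).sq.add (hp.add hX.neg).sq.neg).smul (r := 1/4) (by norm_num)
    convert this using 1
    have e1 : (C (1/4) : RPoly n) * 4 = 1 := by
        rw [show (4 : RPoly n) = C 4 from (map_ofNat C 4).symm, ← C_mul]; norm_num
    linear_combination (- p * X i) * e1

end Qm
end PartA4


section PartA5
open MvPolynomial

noncomputable def pl {n : ℕ} (w : (Fin n →₀ ℕ) → ℝ) : RPoly n →ₗ[ℝ] ℝ :=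
  (basisMonomials (Fin n) ℝ).constr ℝ w

theorem pl_mon {n : ℕ} (w : (Fin n →₀ ℕ) → ℝ) (α : Fin n →₀ ℕ) : pl w (monomial α 1) = w α := by
  have := (basisMonomials (Fin n) ℝ).constr_basis ℝ w α
  simpa [pl] using this

theorem pairing_eq {n : ℕ} (w : (Fin n →₀ ℕ) → ℝ) (p : RPoly n) : pairing p w = pl w p := by
  conv_rhs => rw [p.as_sum]
  rw [map_sum]
  refine Finset.sum_congr rfl fun α _ => ?_
  have : (monomial α (p.coeff α) : RPoly n) = p.coeff α • monomial α 1 := by simp [smul_monomial]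
  rw [this, map_smul, pl_mon, smul_eq_mul]

theorem Qm.pl_nonneg {n : ℕ} {E I : Finset ℕ} {c : ℕ → RPoly n} {p : RPoly n} (hp : Qm E I c p) :
    ∃ k0 : ℕ, ∀ k, k0 ≤ k → ∀ w, MomRelaxPSD E c I c k w → 0 ≤ pl w p := by
  induction hp with
  | sq p =>
    refine ⟨p.totalDegree, fun k hk w hw => ?_⟩
    rw [← pairing_eq]; exact hw.2.2 p hk
  | ineq j hj p =>
    refine ⟨p.totalDegree + ((c j).totalDegree + 1) / 2, fun k hk w hw => ?_⟩
    rw [← pairing_eq]; exact hw.2.1 j hj p hk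
  | eqn j hj p =>
    refine ⟨p.totalDegree + (c j).totalDegree, fun k hk w hw => ?_⟩
    rw [← pairing_eq, hw.1 j hj p (by omega)]
  | add p q _ _ h1 h2 =>
    obtain ⟨k1, h1⟩ := h1
    obtain ⟨k2, h2⟩ := h2
    refine ⟨max k1 k2, fun k hk w hw => ?_⟩
    rw [map_add]
    exact add_nonneg (h1 k (le_trans (le_max_left _ _) hk) w hw) (h2 k (le_trans (le_max_right _ _) hk) w hw)

theorem K_compact {n : ℕ} {E I : Finset ℕ} {c : ℕ → RPoly n} {R : ℝ}
    (h : Qm E I c (C R - ∑ i, X i ^ 2)) : IsCompact (Kset E I c) := by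
  have hcl : IsClosed (Kset E I c) := by
    have : Kset E I c = (⋂ j ∈ E, {x | eval x (c j) = 0}) ∩ (⋂ j ∈ I, {x | 0 ≤ eval x (c j)}) := by
      ext x; simp [Kset]
    rw [this]
    refine IsClosed.inter (isClosed_biInter fun j _ => ?_) (isClosed_biInter fun j _ => ?_)
    · exact isClosed_eq (MvPolynomial.continuous_eval _) continuous_const
    · exact isClosed_le continuous_const (MvPolynomial.continuous_eval _)
  refine (isCompact_Icc (a := fun _ => -(|R|+1)) (b := fun _ => |R| + 1)).of_isClosed_subset hcl ?_
  intro x hx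
  have h1 : ∀ i, x i ^ 2 ≤ R := by
    intro i
    have := (h.arch_i i).eval_nonneg hx
    simp at this
    exact this
  have h2 : ∀ i, |x i| ≤ |R| + 1 := by
    intro i
    have := h1 i
    rw [← sq_abs] at this
    nlinarith [le_abs_self R, abs_nonneg (x i), abs_nonneg R]
  exact ⟨fun i => (abs_le.1 (h2 i)).1, fun i => (abs_le.1 (h2 i)).2⟩

theorem poly_bdd {n : ℕ} {K : Set (Fin n → ℝ)} (hK : IsCompact K) (p : RPoly n) :
    ∃ B : ℝ, 0 < B ∧ ∀ x ∈ K, |eval x p| ≤ B := by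
  obtain ⟨B, hB⟩ := hK.exists_bound_of_continuousOn (f := fun x => eval x p) (MvPolynomial.continuous_eval p).continuousOn
  exact ⟨|B| + 1, by positivity, fun x hx => (hB x hx).trans (by linarith [le_abs_self B])⟩

theorem deg_aux {n m d : ℕ} {f : RPoly n} {a : Fin m → RPoly n} (hf : f.totalDegree ≤ d)
    (ha : ∀ i, (a i).totalDegree ≤ d) (θ : Fin m → ℝ) :
    (f - ∑ i, C (θ i) * a i).totalDegree ≤ d := by
  refine (totalDegree_sub _ _).trans (max_le hf ?_)
  refine totalDegree_finsetSum_le fun i _ => ?_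
  refine (totalDegree_mul _ _).trans ?_
  simpa using ha i

theorem dual_exists {n m m1 d : ℕ} {K : Set (Fin n → ℝ)} (hK : IsCompact K)
    {f : RPoly n} {a : Fin m → RPoly n} {b : Fin m → ℝ}
    (hf : f.totalDegree ≤ d) (ha : ∀ i, (a i).totalDegree ≤ d)
    (θs : Fin m → ℝ) (hθfeas : PFeas m1 d f a K θs)
    (hθmax : ∀ θ : Fin m → ℝ, PFeas m1 d f a K θ →
      (∑ i, b i * θ i) ≤ ∑ i, b i * θs i)
    (hslater : ∃ θ : Fin m → ℝ, (∀ i : Fin m, m1 ≤ (i : ℕ) → 0 ≤ θ i) ∧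
      (f - ∑ i, C (θ i) * a i) ∈ PdInterior d K) :
    ∃ Λ : RPoly n →ₗ[ℝ] ℝ, (∀ p, (∀ x ∈ K, 0 ≤ eval x p) → 0 ≤ Λ p) ∧
      (∀ i : Fin m, (i : ℕ) < m1 → Λ (a i) = b i) ∧ (∀ i : Fin m, m1 ≤ (i : ℕ) → b i ≤ Λ (a i)) ∧
      Λ f ≤ ∑ i, b i * θs i := by
  set v := ∑ i, b i * θs i with hv
  obtain ⟨θ0, hθ0, hd0, ε, hε, hint⟩ := hslater
  have hge : ∀ x ∈ K, ε ≤ eval x (f - ∑ i, C (θ0 i) * a i) := by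
    intro x hx
    have := hint (f - ∑ i, C (θ0 i) * a i - C ε) ((totalDegree_sub _ _).trans (max_le hd0 (by simp))) (by
      intro α
      rw [coeff_sub, coeff_C]
      split_ifs
      · rw [sub_sub_cancel_left, abs_neg, abs_of_pos hε]
      · simp [hε.le]) x hx
    rw [map_sub, eval_C] at this
    linarith
  let s : Set (RPoly n × ℝ) := {y | ∃ (τ : ℝ) (θ : Fin m → ℝ), 0 ≤ τ ∧ (∀ i : Fin m, m1 ≤ (i : ℕ) → 0 ≤ θ i) ∧
    (∀ x ∈ K, 0 ≤ eval x y.1 + τ * eval x f - ∑ i, θ i * eval x (a i)) ∧ y.2 = τ * v - ∑ i, b i * θ i}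
  obtain ⟨g, hg1, hg2⟩ := riesz_unit s ⟨0, 0, le_rfl, by simp, by simp, by simp⟩ (by
    rintro x ⟨τ, θ, h1, h2, h3, h4⟩ y ⟨τ', θ', h1', h2', h3', h4'⟩
    refine ⟨τ + τ', θ + θ', by positivity, fun i hi => add_nonneg (h2 i hi) (h2' i hi), fun z hz => ?_, ?_⟩
    · have := add_nonneg (h3 z hz) (h3' z hz)
      refine this.trans_eq ?_
      simp only [Prod.fst_add, map_add, Pi.add_apply, add_mul, Finset.sum_add_distrib]
      ring
    · simp only [Prod.snd_add, h4, h4', Pi.add_apply, mul_add, Finset.sum_add_distrib]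
      ring) (by
    rintro r hr y ⟨τ, θ, h1, h2, h3, h4⟩
    refine ⟨r * τ, r • θ, by positivity, fun i hi => mul_nonneg hr (h2 i hi), fun z hz => ?_, ?_⟩
    · have := mul_nonneg hr (h3 z hz)
      refine this.trans_eq ?_
      simp only [Prod.smul_fst, smul_eval, Pi.smul_apply, smul_eq_mul, mul_assoc, ← Finset.mul_sum]
      ring
    · simp only [Prod.smul_snd, h4, Pi.smul_apply, smul_eq_mul]
      have : ∑ i, b i * (r * θ i) = r * ∑ i, b i * θ i := by
        rw [Finset.mul_sum]; exact Finset.sum_congr rfl fun i _ => by ring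
      rw [this]; ring) (0, 1) (by
    rintro ⟨τ, θ, h1, h2, h3, h4⟩
    simp only [Prod.snd_neg, Prod.fst_neg, neg_zero, map_zero, zero_add] at h3 h4
    rcases h1.lt_or_eq with h | h
    · have := hθmax (τ⁻¹ • θ) ⟨fun i hi => mul_nonneg (by positivity) (h2 i hi), deg_aux hf ha _, fun x hx => by
        have := mul_nonneg (inv_nonneg.2 h1) (h3 x hx)
        refine this.trans_eq ?_
        simp only [map_sub, map_sum, map_mul, eval_C, Pi.smul_apply, smul_eq_mul, mul_assoc, ← Finset.mul_sum]
        field_simp⟩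
      have e : ∑ i, b i * (τ⁻¹ • θ) i = τ⁻¹ * ∑ i, b i * θ i := by
        rw [Finset.mul_sum]; exact Finset.sum_congr rfl fun i _ => by simp; ring
      have e2 : ∑ i, b i * θ i = τ * v + 1 := by linarith
      rw [e, e2, mul_add, inv_mul_cancel_left₀ h.ne'] at this
      have : 0 < τ⁻¹ := by positivity
      linarith
    · subst h
      have := hθmax (θs + θ) ⟨fun i hi => add_nonneg (hθfeas.1 i hi) (h2 i hi), deg_aux hf ha _, fun x hx => by
        have := add_nonneg (h3 x hx) (hθfeas.2.2 x hx)
        refine this.trans_eq ?_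
        simp only [map_sub, map_sum, map_mul, eval_C, Pi.add_apply, add_mul, Finset.sum_add_distrib]
        ring⟩
      simp only [Pi.add_apply, mul_add, Finset.sum_add_distrib] at this
      linarith) (by
    rintro ⟨q, r⟩
    obtain ⟨B, hB, hB2⟩ := poly_bdd hK q
    refine ⟨(B / ε) * v - ∑ i, b i * (B / ε * θ0 i) - r, B / ε, fun i => B / ε * θ0 i, by positivity, fun i hi => mul_nonneg (by positivity) (hθ0 i hi), fun x hx => ?_, ?_⟩
    · have h1 := (abs_le.1 (hB2 x hx)).1
      have h2 := mul_le_mul_of_nonneg_left (hge x hx) (show 0 ≤ B / ε by positivity)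
      rw [div_mul_cancel₀ _ hε.ne'] at h2
      simp only [map_sub, map_sum, map_mul, eval_C, mul_sub] at h2
      simp only [mul_assoc, ← Finset.mul_sum, Prod.fst_add, Prod.smul_fst, smul_zero, zero_add]
      linarith
    · simp)
  have hL : ∀ q r, g (q, r) = g (q, 0) + r := by
    intro q r
    have : ((q, r) : RPoly n × ℝ) = (q, 0) + r • (0, 1) := by simp
    rw [this, map_add, map_smul, hg1]; simp
  have hai : ∀ (i : Fin m) (t : ℝ), (m1 ≤ (i : ℕ) → 0 ≤ t) → 0 ≤ t * (g (a i, 0) - b i) := by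
    intro i t ht
    have := hg2 (t • (a i, - b i)) ⟨0, Pi.single i t, le_rfl, fun j hj => by
      by_cases h : j = i
      · subst h; simpa using ht hj
      · simp [h], fun x hx => by simp [smul_eval, Pi.single_apply], by
      simp [Pi.single_apply]; ring⟩
    rw [map_smul, hL] at this
    simpa [sub_eq_add_neg] using this
  refine ⟨g.comp (LinearMap.inl ℝ _ _), ?_, ?_, ?_, ?_⟩
  · intro p hp
    exact hg2 (p, 0) ⟨0, 0, le_rfl, by simp, by simpa using hp, by simp⟩
  · intro i hi
    have h1 := hai i 1 (by simp)
    have h2 := hai i (-1) (by omega)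
    simp
    linarith
  · intro i hi
    have h1 := hai i 1 (by simp)
    simp
    linarith
  · have := hg2 (-f, v) ⟨1, 0, zero_le_one, by simp, by simp, by simp⟩
    rw [hL] at this
    have h2 : ((-f, 0) : RPoly n × ℝ) = -(f, 0) := by simp
    rw [h2, map_neg] at this
    simp
    linarith

/-- minimizers have nonpositive objective for `F`. -/
theorem min_le {n m m1 d : ℕ} {E I : Finset ℕ} {c : ℕ → RPoly n} (hK : IsCompact (Kset E I c))
    {f : RPoly n} {a : Fin m → RPoly n} {b : Fin m → ℝ}
    (hf : f.totalDegree ≤ d) (ha : ∀ i, (a i).totalDegree ≤ d)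
    (θs : Fin m → ℝ) (hθfeas : PFeas m1 d f a (Kset E I c) θs)
    (hθmax : ∀ θ : Fin m → ℝ, PFeas m1 d f a (Kset E I c) θ →
      (∑ i, b i * θ i) ≤ ∑ i, b i * θs i)
    (hslater : ∃ θ : Fin m → ℝ, (∀ i : Fin m, m1 ≤ (i : ℕ) → 0 ≤ θ i) ∧
      (f - ∑ i, C (θ i) * a i) ∈ PdInterior d (Kset E I c))
    (k : ℕ) (w : (Fin n →₀ ℕ) → ℝ) (hw : GMomFeas m1 a b E c I c k w)
    (hmin : ∀ w' : (Fin n →₀ ℕ) → ℝ, GMomFeas m1 a b E c I c k w' →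
          pairing f w ≤ pairing f w') :
    pl w (f - ∑ i, C (θs i) * a i) ≤ 0 := by
  obtain ⟨Λ, h1, h2, h3, h4⟩ := dual_exists hK hf ha θs hθfeas hθmax hslater
  have hΛ : pl (fun α => Λ (monomial α 1)) = Λ := by
    refine (basisMonomials (Fin n) ℝ).ext fun α => ?_
    simpa using pl_mon (fun α => Λ (monomial α 1)) α
  have h5 := hmin (fun α => Λ (monomial α 1)) (by
    refine ⟨?_, ?_, ?_, ?_, ?_⟩
    · intro i hi; rw [pairing_eq, hΛ]; exact h2 i hi
    · intro i hi; rw [pairing_eq, hΛ]; exact h3 i hi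
    · intro j hj p _
      rw [pairing_eq, hΛ]
      have e1 := h1 (c j * p) (fun x hx => by simp [hx.1 j hj])
      have e2 := h1 (-(c j * p)) (fun x hx => by simp [hx.1 j hj])
      rw [map_neg] at e2
      linarith
    · intro j hj p _
      rw [pairing_eq, hΛ]
      refine h1 _ fun x hx => ?_
      rw [map_mul, map_pow]
      exact mul_nonneg (hx.2 j hj) (by positivity)
    · intro p _
      rw [pairing_eq, hΛ]
      refine h1 _ fun x hx => ?_
      rw [map_pow]
      positivity)
  rw [pairing_eq, pairing_eq, hΛ] at h5
  have h6 : ∑ i, b i * θs i ≤ ∑ i, θs i * pl w (a i) := by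
    refine Finset.sum_le_sum fun i _ => ?_
    rw [mul_comm]
    by_cases hi : (i : ℕ) < m1
    · rw [← hw.1 i hi, pairing_eq]
    · have := hw.2.1 i (by omega)
      rw [pairing_eq] at this
      exact mul_le_mul_of_nonneg_left this (hθfeas.1 i (by omega))
  simp only [map_sub, map_sum, ← MvPolynomial.smul_eq_C_mul, map_smul, smul_eq_mul]
  linarith
end PartA5


section PartA6
set_option linter.unusedSimpArgs false
open MvPolynomial

section
variable {n : ℕ}

noncomputable def Yv (z : Fin n → ℝ) (i : Fin n) : RPoly n := X i - C (z i)

noncomputable def mz (z : Fin n → ℝ) : Ideal (RPoly n) := RingHom.ker (eval z)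

theorem mem_mz {z : Fin n → ℝ} {p : RPoly n} : p ∈ mz z ↔ eval z p = 0 := RingHom.mem_ker

theorem Yv_mem (z : Fin n → ℝ) (i : Fin n) : Yv z i ∈ mz z := by simp [mem_mz, Yv]

theorem hadamard (z : Fin n → ℝ) (p : RPoly n) :
    ∃ q : Fin n → RPoly n, p = C (eval z p) + ∑ i, Yv z i * q i := by
  induction p using MvPolynomial.induction_on with
  | C a => exact ⟨0, by simp⟩
  | add p r hp hr =>
    obtain ⟨q, hq⟩ := hp
    obtain ⟨q', hq'⟩ := hr
    refine ⟨q + q', ?_⟩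
    simp only [map_add, Pi.add_apply, mul_add, Finset.sum_add_distrib]
    linear_combination hq + hq'
  | mul_X p i hp =>
    obtain ⟨q, hq⟩ := hp
    refine ⟨fun j => q j * X i + (if j = i then C (eval z p) else 0), ?_⟩
    simp only [map_mul, eval_X, mul_add, Finset.sum_add_distrib, mul_ite, mul_zero, Finset.sum_ite_eq',
      Finset.mem_univ, if_true, ← mul_assoc, ← Finset.sum_mul, C_mul]
    simp only [Yv] at hq ⊢
    linear_combination (X i) * hq

theorem hadamard0 {z : Fin n → ℝ} {p : RPoly n} (h : p ∈ mz z) :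
    ∃ q : Fin n → RPoly n, p = ∑ i, Yv z i * q i := by
  obtain ⟨q, hq⟩ := hadamard z p
  rw [mem_mz.1 h] at hq
  exact ⟨q, by simpa using hq⟩

theorem pderiv_Yv (z : Fin n → ℝ) (i k : Fin n) : pderiv k (Yv z i) = if i = k then 1 else 0 := by
  rw [Yv, map_sub, pderiv_C, sub_zero, pderiv_X, Pi.single_apply]

theorem pderiv_sum (z : Fin n → ℝ) (q : Fin n → RPoly n) (k : Fin n) :
    pderiv k (∑ i, Yv z i * q i) = q k + ∑ i, Yv z i * pderiv k (q i) := by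
  rw [map_sum]
  simp only [pderiv_mul, pderiv_Yv, Finset.sum_add_distrib, ite_mul, one_mul, zero_mul, Finset.sum_ite_eq',
      Finset.mem_univ, if_true]

theorem eval_Yv (z : Fin n → ℝ) (i : Fin n) : eval z (Yv z i) = 0 := by simp [Yv]

theorem taylor2 {z : Fin n → ℝ} {p : RPoly n} (h0 : eval z p = 0) (h1 : ∀ i, eval z (pderiv i p) = 0) :
    (∀ i j, hessP p z i j = hessP p z j i) ∧
    p - ∑ i, ∑ j, C (hessP p z i j / 2) * (Yv z i * Yv z j) ∈ (mz z) ^ 3 := by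
  obtain ⟨q, hq⟩ := hadamard0 (mem_mz.2 h0)
  have hq1 : ∀ i, eval z (q i) = 0 := by
    intro i
    have := h1 i
    rw [hq, pderiv_sum] at this
    simpa [eval_Yv] using this
  choose r hr using fun i => hadamard0 (mem_mz.2 (hq1 i))
  have hdr : ∀ i j, eval z (pderiv j (q i)) = eval z (r i j) := by
    intro i j
    rw [hr, pderiv_sum]
    simp [eval_Yv]
  have hh : ∀ i j, hessP p z i j = eval z (r j i) + eval z (r i j) := by
    intro i j
    rw [hessP, hq, pderiv_sum, map_add, pderiv_sum]
    simp [eval_Yv, hdr]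
  refine ⟨fun i j => by rw [hh, hh, add_comm], ?_⟩
  have hp : p = ∑ i, ∑ j, C (1/2) * (r i j + r j i) * (Yv z i * Yv z j) := by
    have e1 : p = ∑ i, ∑ j, r i j * (Yv z i * Yv z j) := by
      rw [hq]
      refine Finset.sum_congr rfl fun i _ => ?_
      rw [hr i, Finset.mul_sum]
      exact Finset.sum_congr rfl fun j _ => by ring
    have e2 : p = ∑ i, ∑ j, r j i * (Yv z i * Yv z j) := by
      rw [e1, Finset.sum_comm]
      exact Finset.sum_congr rfl fun i _ => Finset.sum_congr rfl fun j _ => by ring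
    have e3 : p = C (1/2) * (p + p) := by
      rw [← two_mul, ← mul_assoc, show (2 : RPoly n) = C 2 from (map_ofNat C 2).symm, ← C_mul]
      norm_num
    rw [e3]
    nth_rewrite 1 [e1]
    nth_rewrite 1 [e2]
    rw [← Finset.sum_add_distrib, Finset.mul_sum]
    refine Finset.sum_congr rfl fun i _ => ?_
    rw [← Finset.sum_add_distrib, Finset.mul_sum]
    exact Finset.sum_congr rfl fun j _ => by ring
  have : p - ∑ i, ∑ j, C (hessP p z i j / 2) * (Yv z i * Yv z j) =
    ∑ i, ∑ j, (C (1/2) * (r i j + r j i) - C (hessP p z i j / 2)) * (Yv z i * Yv z j) := by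
    simp only [sub_mul, Finset.sum_sub_distrib]
    rw [← hp]
  rw [this]
  refine Ideal.sum_mem _ fun i _ => Ideal.sum_mem _ fun j _ => ?_
  rw [pow_succ', pow_two]
  refine Ideal.mul_mem_mul ?_ (Ideal.mul_mem_mul (Yv_mem z i) (Yv_mem z j))
  rw [mem_mz, hh]
  simp
  ring

def PDat (z : Fin n → ℝ) (p : RPoly n) : Prop :=
  ∃ η : ℝ, 0 < η ∧ ∃ (m : ℕ) (B : Fin m → Fin n → ℝ),
    p - (C η * ∑ i, Yv z i ^ 2 + ∑ l, (∑ i, C (B l i) * Yv z i) ^ 2) ∈ (mz z) ^ 3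

theorem PDat.congr {z : Fin n → ℝ} {p q : RPoly n} (hp : PDat z p) (h : q - p ∈ (mz z) ^ 3) : PDat z q := by
  obtain ⟨η, hη, m, B, hB⟩ := hp
  refine ⟨η, hη, m, B, ?_⟩
  have := Ideal.add_mem _ h hB
  convert this using 1; ring

theorem pos_scale {Q : (Fin n → ℝ) → ℝ} (hs : ∀ (t : ℝ) v, Q (t • v) = t ^ 2 * Q v)
    (h : ∀ v ∈ Metric.sphere (0 : Fin n → ℝ) 1, 0 < Q v) {v : Fin n → ℝ} (hv : v ≠ 0) : 0 < Q v := by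
  have h1 := h (‖v‖⁻¹ • v) (by simp [norm_smul, hv])
  rw [hs] at h1
  exact pos_of_mul_pos_right h1 (by positivity)

theorem pd_of_hess {z : Fin n → ℝ} {p : RPoly n} (h0 : eval z p = 0) (h1 : ∀ i, eval z (pderiv i p) = 0)
    (h2 : ∀ v : Fin n → ℝ, v ≠ 0 → 0 < ∑ i, ∑ j, v i * hessP p z i j * v j) : PDat z p := by
  obtain ⟨hsym, hT⟩ := taylor2 h0 h1
  set H := hessP p z with hH
  let Q : (Fin n → ℝ) → ℝ := fun v => ∑ i, ∑ j, v i * H i j * v j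
  have hQc : Continuous Q := by fun_prop
  obtain ⟨η, hη, hη2⟩ : ∃ η : ℝ, 0 < η ∧ ∀ v : Fin n → ℝ, 0 ≤ Q v / 2 - η * ∑ i, v i ^ 2 := by
    have hS := isCompact_sphere (0 : Fin n → ℝ) 1
    obtain ⟨δ, hδ, hδ2⟩ : ∃ δ : ℝ, 0 < δ ∧ ∀ v ∈ Metric.sphere (0 : Fin n → ℝ) 1, δ ≤ Q v := by
      rcases (Metric.sphere (0 : Fin n → ℝ) 1).eq_empty_or_nonempty with h | h
      · exact ⟨1, one_pos, by simp [h]⟩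
      · obtain ⟨v0, hv0, hm⟩ := hS.exists_isMinOn h hQc.continuousOn
        exact ⟨Q v0, h2 v0 (by rintro rfl; simp at hv0), fun v hv => hm hv⟩
    refine ⟨δ / (2 * (n + 1)), by positivity, fun v => ?_⟩
    by_cases hv : v = 0
    · subst hv; simp [Q]
    · refine le_of_lt (pos_scale (Q := fun v => Q v / 2 - δ / (2 * (n + 1)) * ∑ i, v i ^ 2) ?_ ?_ hv)
      · intro t v
        have e1 : Q (t • v) = t ^ 2 * Q v := by
          simp only [Q, Finset.mul_sum]
          exact Finset.sum_congr rfl fun i _ => Finset.sum_congr rfl fun j _ => by simp; ring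
        have e2 : ∑ i, (t • v) i ^ 2 = t ^ 2 * ∑ i, v i ^ 2 := by
          simp only [Finset.mul_sum]
          exact Finset.sum_congr rfl fun i _ => by simp; ring
        simp only [e1, e2]; ring
      · intro v hv
        have hv1 : ∀ i, v i ^ 2 ≤ 1 := by
          intro i
          have := norm_le_pi_norm v i
          rw [mem_sphere_zero_iff_norm.1 hv] at this
          rw [sq_le_one_iff_abs_le_one]; exact this
        have : ∑ i, v i ^ 2 ≤ n := by
          refine (Finset.sum_le_sum fun i _ => hv1 i).trans ?_
          simp
        have h3 := hδ2 v hv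
        have h4 : δ / (2 * (n + 1)) * ∑ i, v i ^ 2 ≤ δ / (2 * (n + 1)) * n := mul_le_mul_of_nonneg_left this (by positivity)
        have h5 : δ / (2 * (n + 1)) * n < δ / 2 := by
          rw [div_mul_eq_mul_div, div_lt_div_iff₀ (by positivity) (by positivity)]
          nlinarith
        show 0 < Q v / 2 - δ / (2 * (n + 1)) * ∑ i, v i ^ 2
        linarith
  let A : Matrix (Fin n) (Fin n) ℝ := fun i j => H i j / 2 - if i = j then η else 0
  have hA : A.PosSemidef := by
    refine .of_dotProduct_mulVec_nonneg ?_ ?_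
    · ext i j
      show H j i / 2 - (if j = i then η else 0) = H i j / 2 - if i = j then η else 0
      rw [hsym j i]
      congr 1
      simp [eq_comm]
    · intro v
      refine (hη2 v).trans_eq ?_
      simp only [Q, A, dotProduct, Matrix.mulVec, Pi.star_apply, star_trivial, Finset.mul_sum, Finset.sum_div, sub_mul, mul_sub,
        Finset.sum_sub_distrib, ite_mul, mul_ite, zero_mul, mul_zero, Finset.sum_ite_eq, Finset.mem_univ, if_true]
      congr 1
      · exact Finset.sum_congr rfl fun i _ => Finset.sum_congr rfl fun j _ => by ring
      · exact Finset.sum_congr rfl fun i _ => by ring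
  obtain ⟨m, B, hB⟩ := Matrix.posSemidef_iff_eq_sum_vecMulVec.mp hA
  refine ⟨η, hη, m, B, ?_⟩
  convert hT using 2
  have hAij : ∀ i j, H i j / 2 = ∑ l, B l i * B l j + if i = j then η else 0 := by
    intro i j
    have := congrFun (congrFun hB i) j
    rw [Matrix.sum_apply] at this
    simp only [Matrix.vecMulVec_apply, Pi.star_apply, star_trivial] at this
    rw [← this]
    simp [A]
  simp only [hAij, C_add, add_mul, Finset.sum_add_distrib]
  rw [add_comm]
  congr 1
  · simp only [map_sum, Finset.sum_mul, pow_two, Finset.mul_sum]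
    rw [Finset.sum_comm]
    refine Finset.sum_congr rfl fun i _ => ?_
    rw [Finset.sum_comm]
    refine Finset.sum_congr rfl fun j _ => Finset.sum_congr rfl fun l _ => ?_
    rw [C_mul]; ring
  · rw [Finset.mul_sum]
    refine Finset.sum_congr rfl fun i _ => ?_
    simp [apply_ite, pow_two]
end
end PartA6


section PartA7
open MvPolynomial Asymptotics Filter Topology
set_option linter.unusedSimpArgs false
section
variable {n : ℕ}

theorem mz_bigO (z : Fin n → ℝ) (k : ℕ) {r : RPoly n} (hr : r ∈ (mz z) ^ k) :
    (fun x => eval x r) =O[𝓝 z] fun x => ‖x - z‖ ^ k := by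
  induction k generalizing r with
  | zero =>
    simp only [pow_zero]
    exact ((MvPolynomial.continuous_eval r).continuousAt).isBigO_one ℝ
  | succ k ih =>
    rw [pow_succ'] at hr
    induction hr using Submodule.mul_induction_on' with
    | mem_mul_mem a ha b hb =>
      obtain ⟨q, rfl⟩ := hadamard0 ha
      have h1 : (fun x => eval x (∑ i, Yv z i * q i)) =O[𝓝 z] fun x => ‖x - z‖ := by
        simp only [map_sum, map_mul]
        refine IsBigO.fun_sum fun i _ => ?_
        have e1 : (fun x => eval x (Yv z i)) =O[𝓝 z] fun x => ‖x - z‖ := by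
          refine IsBigO.of_bound 1 (Eventually.of_forall fun x => ?_)
          simpa [Yv] using norm_le_pi_norm (x - z) i
        have e2 : (fun x => eval x (q i)) =O[𝓝 z] fun _ => (1 : ℝ) :=
          ((MvPolynomial.continuous_eval (q i)).continuousAt).isBigO_one ℝ
        simpa using e1.mul e2
      have := h1.mul (ih hb)
      refine this.congr (fun x => by rw [map_mul]) (fun x => by ring)
    | add x _ y _ h1 h2 => simp only [map_add]; exact h1.add h2

theorem sq_norm_le (v : Fin n → ℝ) : ‖v‖ ^ 2 ≤ ∑ i, v i ^ 2 := by
  have h0 : 0 ≤ ∑ i, v i ^ 2 := Finset.sum_nonneg fun i _ => sq_nonneg _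
  have : ‖v‖ ≤ Real.sqrt (∑ i, v i ^ 2) := by
    rw [pi_norm_le_iff_of_nonneg (Real.sqrt_nonneg _)]
    intro i
    refine Real.abs_le_sqrt ?_
    exact Finset.single_le_sum (f := fun i => v i ^ 2) (fun j _ => sq_nonneg _) (Finset.mem_univ i)
  calc ‖v‖ ^ 2 ≤ (Real.sqrt (∑ i, v i ^ 2)) ^ 2 := by gcongr
    _ = _ := Real.sq_sqrt h0

theorem PDat.pos_near {z : Fin n → ℝ} {p : RPoly n} (hp : PDat z p) :
    ∀ᶠ x in 𝓝 z, x ≠ z → 0 < eval x p := by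
  obtain ⟨η, hη, m, B, hB⟩ := hp
  have h1 := mz_bigO z 3 hB
  have h2 : (fun x : Fin n → ℝ => ‖x - z‖ ^ 3) =o[𝓝 z] fun x => ‖x - z‖ ^ 2 := by
    have : (fun x : Fin n → ℝ => ‖x - z‖) =o[𝓝 z] fun _ => (1 : ℝ) := by
      rw [isLittleO_one_iff]
      have : Tendsto (fun x : Fin n → ℝ => ‖x - z‖) (𝓝 z) (𝓝 ‖z - z‖) := (Continuous.tendsto (by fun_prop) z)
      simpa using this
    have h := this.mul_isBigO (isBigO_refl (fun x : Fin n → ℝ => ‖x - z‖ ^ 2) (𝓝 z))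
    refine h.congr (fun x => by ring) (fun x => by ring)
  have h3 := (h1.trans_isLittleO h2).bound (show 0 < η / 2 by positivity)
  filter_upwards [h3] with x hx hxz
  have hn : 0 < ‖x - z‖ ^ 2 := by
    have : 0 < ‖x - z‖ := norm_pos_iff.2 (sub_ne_zero.2 hxz)
    positivity
  have h4 := sq_norm_le (x - z)
  rw [Real.norm_eq_abs, Real.norm_of_nonneg hn.le] at hx
  have h5 := (abs_le.1 hx).1
  simp only [map_sub, map_add, map_mul, map_sum, map_pow, eval_C, Yv, eval_X] at h5
  have h6 : 0 ≤ ∑ l, (∑ i, B l i * (x i - z i)) ^ 2 := Finset.sum_nonneg fun i _ => sq_nonneg _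
  simp only [Pi.sub_apply] at h4
  nlinarith [mul_le_mul_of_nonneg_left h4 hη.le]

theorem finsler {S : Set (Fin n → ℝ)} (hS : IsCompact S) {Q N : (Fin n → ℝ) → ℝ} (hQ : Continuous Q) (hN : Continuous N)
    (hN0 : ∀ v, 0 ≤ N v) (h : ∀ v ∈ S, N v = 0 → 0 < Q v) : ∃ c : ℝ, 0 < c ∧ ∀ v ∈ S, 0 < Q v + c * N v := by
  have hS0 : IsCompact (S ∩ {v | Q v ≤ 0}) := hS.inter_right (isClosed_le hQ continuous_const)
  obtain ⟨δ, hδ, hδ2⟩ : ∃ δ : ℝ, 0 < δ ∧ ∀ v ∈ S ∩ {v | Q v ≤ 0}, δ ≤ N v := by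
    rcases (S ∩ {v | Q v ≤ 0}).eq_empty_or_nonempty with h' | h'
    · exact ⟨1, one_pos, by simp [h']⟩
    · obtain ⟨v0, hv0, hm⟩ := hS0.exists_isMinOn h' hN.continuousOn
      refine ⟨N v0, (hN0 v0).lt_of_ne ?_, fun v hv => hm hv⟩
      intro e
      exact absurd (h v0 hv0.1 e.symm) (not_lt.2 hv0.2)
  obtain ⟨B, hB⟩ := hS.exists_bound_of_continuousOn hQ.continuousOn
  refine ⟨(|B| + 1) / δ, by positivity, fun v hv => ?_⟩
  by_cases hq : Q v ≤ 0
  · have h1 := mul_le_mul_of_nonneg_left (hδ2 v ⟨hv, hq⟩) (show 0 ≤ (|B| + 1) / δ by positivity)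
    rw [div_mul_cancel₀ _ hδ.ne'] at h1
    have h2 := (abs_le.1 (hB v hv)).1
    linarith [le_abs_self B]
  · push Not at hq
    have := mul_nonneg (show 0 ≤ (|B| + 1) / δ by positivity) (hN0 v)
    linarith

theorem gradP_sq {z : Fin n → ℝ} {g : RPoly n} (hg : eval z g = 0) (i : Fin n) : eval z (pderiv i (g ^ 2)) = 0 := by
  rw [pow_two, pderiv_mul]; simp [hg]

theorem hessP_sq {z : Fin n → ℝ} {g : RPoly n} (hg : eval z g = 0) (i j : Fin n) :
    hessP (g ^ 2) z i j = 2 * (gradP g z i * gradP g z j) := by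
  rw [hessP, pow_two, pderiv_mul]
  simp only [map_add, pderiv_mul, map_mul, hg, gradP]
  ring

open Classical in
theorem local_cert {E I : Finset ℕ} {c : ℕ → RPoly n} {F : RPoly n} {z : Fin n → ℝ} (hz : z ∈ Kset E I c)
    (hF : eval z F = 0) (hopt : OptCondsAt E c I c F z) :
    ∃ ρ τ : ℕ → RPoly n, PDat z (F - ∑ j ∈ I, c j * ρ j ^ 2 - ∑ j ∈ E, c j * τ j) := by
  obtain ⟨-, μ, lam, hkkt, hcomp, hscc, hsosc⟩ := hopt
  let N : (Fin n → ℝ) → ℝ := fun v => (∑ j ∈ E, (∑ i, v i * gradP (c j) z i) ^ 2) +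
    ∑ j ∈ I with eval z (c j) = 0, (∑ i, v i * gradP (c j) z i) ^ 2
  let Q : (Fin n → ℝ) → ℝ := fun v => ∑ i, ∑ i', v i *
        ((hessP F z i i' - ∑ j ∈ E, μ j * hessP (c j) z i i')
          - ∑ j ∈ I, lam j * hessP (c j) z i i') * v i'
  have hN0 : ∀ v, 0 ≤ N v := fun v => add_nonneg (Finset.sum_nonneg fun i _ => sq_nonneg _) (Finset.sum_nonneg fun i _ => sq_nonneg _)
  obtain ⟨κ, hκ, hκ2⟩ := finsler (isCompact_sphere (0 : Fin n → ℝ) 1) (Q := Q) (N := N) (by fun_prop) (by fun_prop) hN0 (by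
    intro v hv hNv
    have hNv' := (add_eq_zero_iff_of_nonneg (Finset.sum_nonneg fun i _ => sq_nonneg _) (Finset.sum_nonneg fun i _ => sq_nonneg _)).1 hNv
    rw [Finset.sum_eq_zero_iff_of_nonneg (fun i _ => sq_nonneg _), Finset.sum_eq_zero_iff_of_nonneg (fun i _ => sq_nonneg _)] at hNv'
    refine hsosc v (by rintro rfl; simp at hv) (fun j hj => ?_) (fun j hj hj0 => ?_)
    · exact pow_eq_zero_iff (two_ne_zero) |>.1 (hNv'.1 j hj)
    · exact pow_eq_zero_iff (two_ne_zero) |>.1 (hNv'.2 j (by simp [hj, hj0])))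
  have hκ3 : ∀ v, v ≠ 0 → 0 < Q v + κ * N v := by
    intro v hv
    refine pos_scale (Q := fun v => Q v + κ * N v) ?_ hκ2 hv
    intro t v
    have e1 : Q (t • v) = t ^ 2 * Q v := by
      simp only [Q, Finset.mul_sum]
      exact Finset.sum_congr rfl fun i _ => Finset.sum_congr rfl fun j _ => by simp only [Pi.smul_apply, smul_eq_mul]; ring
    have e0 : ∀ j, (∑ i, (t • v) i * gradP (c j) z i) ^ 2 = t ^ 2 * (∑ i, v i * gradP (c j) z i) ^ 2 := by
      intro j
      simp only [Pi.smul_apply, smul_eq_mul, mul_assoc, ← Finset.mul_sum]; ring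
    have e2 : N (t • v) = t ^ 2 * N v := by
      simp only [N, e0, ← Finset.mul_sum, mul_add]
    simp only [e1, e2]; ring
  let P : RPoly n := F - ∑ j ∈ I, C (lam j) * c j - ∑ j ∈ E, C (μ j) * c j +
    C (κ / 2) * ((∑ j ∈ E, c j ^ 2) + ∑ j ∈ I with eval z (c j) = 0, c j ^ 2)
  have hP : PDat z P := by
    apply pd_of_hess
    · have h1 : ∑ j ∈ I, lam j * eval z (c j) = 0 := Finset.sum_eq_zero fun j hj => (hcomp j hj).2
      have h2 : ∑ j ∈ E, μ j * eval z (c j) = 0 := Finset.sum_eq_zero fun j hj => by rw [hz.1 j hj, mul_zero]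
      have h3 : ∑ j ∈ E, eval z (c j) ^ 2 = 0 := Finset.sum_eq_zero fun j hj => by rw [hz.1 j hj]; ring
      have h4 : ∑ j ∈ I with eval z (c j) = 0, eval z (c j) ^ 2 = 0 := Finset.sum_eq_zero fun j hj => by
        rw [(Finset.mem_filter.1 hj).2]; ring
      simp only [P, map_add, map_sub, map_sum, map_mul, map_pow, eval_C, hF, h1, h2, h3, h4]
      ring
    · intro i
      have h0 := congrFun hkkt i
      simp only [gradP, Pi.add_apply, Finset.sum_apply, Pi.smul_apply, smul_eq_mul] at h0
      have h3 : ∑ j ∈ E, eval z (pderiv i (c j ^ 2)) = 0 := Finset.sum_eq_zero fun j hj => gradP_sq (hz.1 j hj) i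
      have h4 : ∑ j ∈ I with eval z (c j) = 0, eval z (pderiv i (c j ^ 2)) = 0 := Finset.sum_eq_zero fun j hj => 
        gradP_sq (Finset.mem_filter.1 hj).2 i
      simp only [P, map_add, map_sub, map_sum, pderiv_C_mul, map_mul, smul_eval, eval_C, h3, h4, h0]
      ring
    · intro v hv
      refine (hκ3 v hv).trans_eq ?_
      have h3 : ∀ i i', ∑ j ∈ E, eval z (pderiv i (pderiv i' (c j ^ 2))) = ∑ j ∈ E, 2 * (gradP (c j) z i * gradP (c j) z i') :=
        fun i i' => Finset.sum_congr rfl fun j hj => hessP_sq (hz.1 j hj) i i'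
      have h4 : ∀ i i', ∑ j ∈ I with eval z (c j) = 0, eval z (pderiv i (pderiv i' (c j ^ 2))) = 
        ∑ j ∈ I with eval z (c j) = 0, 2 * (gradP (c j) z i * gradP (c j) z i') :=
        fun i i' => Finset.sum_congr rfl fun j hj => hessP_sq (Finset.mem_filter.1 hj).2 i i'
      have hh : ∀ i i', hessP P z i i' = ((hessP F z i i' - ∑ j ∈ E, μ j * hessP (c j) z i i')
          - ∑ j ∈ I, lam j * hessP (c j) z i i') + κ * ((∑ j ∈ E, (gradP (c j) z i * gradP (c j) z i')) +
          ∑ j ∈ I with eval z (c j) = 0, (gradP (c j) z i * gradP (c j) z i')) := by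
        intro i i'
        simp only [hessP, P, map_add, map_sub, map_sum, pderiv_C_mul, map_mul, smul_eval, eval_C, h3, h4, ← Finset.mul_sum]
        ring
      have hsqs : ∀ j, (∑ i, v i * gradP (c j) z i) ^ 2 = ∑ i, ∑ i', v i * (gradP (c j) z i * gradP (c j) z i') * v i' := by
        intro j
        rw [pow_two, Finset.sum_mul_sum]
        exact Finset.sum_congr rfl fun i _ => Finset.sum_congr rfl fun j _ => by ring
      have hN : N v = ∑ i, ∑ i', v i * ((∑ j ∈ E, (gradP (c j) z i * gradP (c j) z i')) +
          ∑ j ∈ I with eval z (c j) = 0, (gradP (c j) z i * gradP (c j) z i')) * v i' := by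
        have hsw : ∀ s : Finset ℕ, ∑ j ∈ s, (∑ i, v i * gradP (c j) z i) ^ 2 = 
            ∑ i, ∑ i', v i * (∑ j ∈ s, (gradP (c j) z i * gradP (c j) z i')) * v i' := by
          intro s
          simp only [hsqs]
          rw [Finset.sum_comm]
          refine Finset.sum_congr rfl fun i _ => ?_
          rw [Finset.sum_comm]
          refine Finset.sum_congr rfl fun i' _ => ?_
          rw [Finset.mul_sum, Finset.sum_mul]
        simp only [N, hsw, mul_add, add_mul, Finset.sum_add_distrib]
      rw [hN]
      simp only [Q, Finset.mul_sum, ← Finset.sum_add_distrib, hh]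
      refine Finset.sum_congr rfl fun i _ => Finset.sum_congr rfl fun i' _ => ?_
      ring
  refine ⟨fun j => C (Real.sqrt (lam j)) * (1 - C (κ / (4 * lam j)) * c j), fun j => C (μ j) - C (κ / 2) * c j, hP.congr ?_⟩
  have hI : ∑ j ∈ I, c j * (C (Real.sqrt (lam j)) * (1 - C (κ / (4 * lam j)) * c j)) ^ 2 =
      ∑ j ∈ I, C (lam j) * c j - C (κ / 2) * ∑ j ∈ I with eval z (c j) = 0, c j ^ 2
       + ∑ j ∈ I with eval z (c j) = 0, C (κ ^ 2 / (16 * lam j)) * c j ^ 3 := by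
    rw [Finset.mul_sum, Finset.sum_filter, Finset.sum_filter, ← Finset.sum_sub_distrib, ← Finset.sum_add_distrib]
    refine Finset.sum_congr rfl fun j hj => ?_
    have hsq : (C (Real.sqrt (lam j)) : RPoly n) ^ 2 = C (lam j) := by
      rw [← C_pow, Real.sq_sqrt (hcomp j hj).1]
    split_ifs with h
    · have hl : 0 < lam j := by simpa [h] using hscc j hj
      have e1 : (C (κ / 2) : RPoly n) = 2 * (C (lam j) * C (κ / (4 * lam j))) := by
        rw [← C_mul, show (2 : RPoly n) = C 2 from (map_ofNat C 2).symm, ← C_mul]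
        congr 1; field_simp; norm_num
      have e2 : (C (κ ^ 2 / (16 * lam j)) : RPoly n) = C (lam j) * C (κ / (4 * lam j)) ^ 2 := by
        rw [← C_pow, ← C_mul]
        congr 1; field_simp; norm_num
      rw [mul_pow, hsq, e1, e2]; ring
    · have hl : lam j = 0 := by
        rcases mul_eq_zero.1 (hcomp j hj).2 with h' | h'
        · exact h'
        · exact absurd h' h
      simp [hl]
  have hE : ∑ j ∈ E, c j * (C (μ j) - C (κ / 2) * c j) = ∑ j ∈ E, C (μ j) * c j - C (κ / 2) * ∑ j ∈ E, c j ^ 2 := by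
    rw [Finset.mul_sum, ← Finset.sum_sub_distrib]
    exact Finset.sum_congr rfl fun j _ => by ring
  rw [hI, hE]
  have : ∑ j ∈ I with eval z (c j) = 0, C (κ ^ 2 / (16 * lam j)) * c j ^ 3 ∈ mz z ^ 3 := by
    refine Ideal.sum_mem _ fun j hj => Ideal.mul_mem_left _ _ (Ideal.pow_mem_pow (mem_mz.2 (Finset.mem_filter.1 hj).2) 3)
  have := (mz z ^ 3).neg_mem this
  convert this using 1
  simp only [P]
  ring
end
end PartA7


section PartA8
open MvPolynomial Asymptotics Filter Topology
set_option linter.unusedSimpArgs false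
section
variable {n : ℕ}

theorem mz_coprime {z z' : Fin n → ℝ} (h : z ≠ z') : IsCoprime (mz z) (mz z') := by
  obtain ⟨i, hi⟩ := Function.ne_iff.1 h
  rw [Ideal.isCoprime_iff_exists]
  have hd : z' i - z i ≠ 0 := sub_ne_zero.2 (Ne.symm hi)
  refine ⟨C (z' i - z i)⁻¹ * Yv z i, Ideal.mul_mem_left _ _ (Yv_mem z i), -(C (z' i - z i)⁻¹ * Yv z' i),
    (Ideal.neg_mem_iff _).2 (Ideal.mul_mem_left _ _ (Yv_mem z' i)), ?_⟩
  have : (C (z' i - z i)⁻¹ : RPoly n) * (C (z' i) - C (z i)) = 1 := by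
    rw [← C_sub, ← C_mul, inv_mul_cancel₀ hd, C_1]
  simp only [Yv]
  linear_combination this

theorem crt (Z : Finset (Fin n → ℝ)) (k : ℕ) (p : (Fin n → ℝ) → RPoly n) :
    ∃ r : RPoly n, ∀ z ∈ Z, r - p z ∈ (mz z) ^ k := by
  obtain ⟨r, hr⟩ := Ideal.exists_forall_sub_mem_ideal (ι := Z) (I := fun z => (mz z.1) ^ k) (by
    intro z z' h
    exact (mz_coprime (fun e => h (Subtype.ext e))).pow) (fun z => p z.1)
  exact ⟨r, fun z hz => hr ⟨z, hz⟩⟩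

theorem Z_finite {E I : Finset ℕ} {c : ℕ → RPoly n} (hK : IsCompact (Kset E I c)) {F : RPoly n}
    (hopt : ∀ z ∈ Kset E I c, eval z F = 0 → OptCondsAt E c I c F z) :
    {x | x ∈ Kset E I c ∧ eval x F = 0}.Finite := by
  have hc : IsCompact {x | x ∈ Kset E I c ∧ eval x F = 0} :=
    hK.inter_right (isClosed_eq (MvPolynomial.continuous_eval F) continuous_const)
  have hnb : ∀ z ∈ {x | x ∈ Kset E I c ∧ eval x F = 0}, ∃ U ∈ 𝓝 z, ∀ x ∈ U, x ∈ Kset E I c → eval x F = 0 → x = z := by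
    intro z hz
    obtain ⟨ρ, τ, hP⟩ := local_cert hz.1 hz.2 (hopt z hz.1 hz.2)
    refine ⟨_, hP.pos_near, fun x hx hxK hx0 => ?_⟩
    by_contra hne
    have h1 := hx hne
    have h2 : ∑ j ∈ E, eval x (c j) * eval x (τ j) = 0 := Finset.sum_eq_zero fun j hj => by rw [hxK.1 j hj, zero_mul]
    have h3 : 0 ≤ ∑ j ∈ I, eval x (c j) * eval x (ρ j) ^ 2 := Finset.sum_nonneg fun j hj => mul_nonneg (hxK.2 j hj) (sq_nonneg _)
    simp only [map_sub, map_sum, map_mul, map_pow, h2, hx0] at h1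
    linarith
  choose! U hU1 hU2 using hnb
  obtain ⟨t, ht, hcov⟩ := hc.elim_nhds_subcover U hU1
  refine t.finite_toSet.subset fun x hx => ?_
  obtain ⟨z, hz, hxz⟩ := Set.mem_iUnion₂.1 (hcov hx)
  rw [hU2 z (ht z hz) x hxz hx.1 hx.2]
  exact hz

theorem globalize {E I : Finset ℕ} {c : ℕ → RPoly n} (hK : IsCompact (Kset E I c)) {F : RPoly n}
    (hF : ∀ x ∈ Kset E I c, 0 ≤ eval x F)
    (hopt : ∀ z ∈ Kset E I c, eval z F = 0 → OptCondsAt E c I c F z)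
    (Z : Finset (Fin n → ℝ)) (hZ : ∀ x, x ∈ Z ↔ x ∈ Kset E I c ∧ eval x F = 0) :
    ∃ G : RPoly n, (∀ z ∈ Z, PDat z G) ∧ (∀ x ∈ Kset E I c, x ∉ Z → 0 < eval x G) ∧ Qm E I c (F - G) := by
  have hl : ∀ z ∈ Z, ∃ ρ τ : ℕ → RPoly n, PDat z (F - ∑ j ∈ I, c j * ρ j ^ 2 - ∑ j ∈ E, c j * τ j) := by
    intro z hz
    have := (hZ z).1 hz
    exact local_cert this.1 this.2 (hopt z this.1 this.2)
  choose! ρ τ hP using hl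
  choose r hr using fun j => crt Z 3 (fun z => ρ z j)
  choose t ht using fun j => crt Z 3 (fun z => τ z j)
  let S : RPoly n := ∑ j ∈ I, c j * r j ^ 2 + ∑ j ∈ E, c j * t j
  have hS : ∀ z ∈ Z, (∑ j ∈ I, c j * ρ z j ^ 2 + ∑ j ∈ E, c j * τ z j) - S ∈ mz z ^ 3 := by
    intro z hz
    have h1 : ∑ j ∈ I, c j * ((r j + ρ z j) * (r j - ρ z j)) + ∑ j ∈ E, c j * (t j - τ z j) ∈ mz z ^ 3 := by
      refine Ideal.add_mem _ (Ideal.sum_mem _ fun j _ => ?_) (Ideal.sum_mem _ fun j _ => ?_)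
      · exact Ideal.mul_mem_left _ _ (Ideal.mul_mem_left _ _ (hr j z hz))
      · exact Ideal.mul_mem_left _ _ (ht j z hz)
    rw [← Ideal.neg_mem_iff]
    convert h1 using 1
    simp only [S]
    have e1 : ∀ j, c j * ((r j + ρ z j) * (r j - ρ z j)) = c j * r j ^ 2 - c j * ρ z j ^ 2 := fun j => by ring
    simp only [e1]
    simp only [mul_sub, Finset.sum_sub_distrib]
    ring
  let W : RPoly n := ∏ z ∈ Z, (∑ i, Yv z i ^ 2) ^ 2
  have hW : ∀ z ∈ Z, W ∈ mz z ^ 3 := by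
    intro z hz
    have h1 : (∑ i, Yv z i ^ 2) ^ 2 ∈ mz z ^ 3 := by
      have h2 : ∑ i, Yv z i ^ 2 ∈ mz z ^ 2 := Ideal.sum_mem _ fun i _ => Ideal.pow_mem_pow (Yv_mem z i) 2
      have h3 := Ideal.pow_mem_pow h2 2
      rw [← pow_mul] at h3
      exact Ideal.pow_le_pow_right (by norm_num) h3
    exact Ideal.mem_of_dvd _ (Finset.dvd_prod_of_mem _ hz) h1
  have hW0 : ∀ x, 0 ≤ eval x W := by
    intro x
    simp only [W, map_prod, map_pow]
    exact Finset.prod_nonneg fun z _ => sq_nonneg _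
  have hWp : ∀ x, x ∉ Z → 0 < eval x W := by
    intro x hx
    simp only [W, map_prod, map_pow]
    refine Finset.prod_pos fun z hz => ?_
    have hne : x ≠ z := by rintro rfl; exact hx hz
    have h1 : 0 < ‖x - z‖ := norm_pos_iff.2 (sub_ne_zero.2 hne)
    have h2 := sq_norm_le (x - z)
    have : 0 < eval x (∑ i, Yv z i ^ 2) := by
      simp only [map_sum, map_pow, Yv, map_sub, eval_X, eval_C]
      simp only [Pi.sub_apply] at h2
      have : 0 < ‖x - z‖ ^ 2 := by positivity
      linarith
    positivity
  obtain ⟨B, hB, hB2⟩ := poly_bdd hK W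
  obtain ⟨B', hB', hB2'⟩ := poly_bdd hK S
  let ψ : RPoly n := 1 - C B⁻¹ * W
  have hψ : ∀ x, eval x ψ = 1 - B⁻¹ * eval x W := fun x => by simp [ψ]
  have hψ0 : ∀ x ∈ Kset E I c, 0 ≤ eval x ψ := by
    intro x hx
    have h1 := (abs_le.1 (hB2 x hx)).2
    have h2 := mul_le_mul_of_nonneg_left h1 (inv_nonneg.2 hB.le)
    rw [inv_mul_cancel₀ hB.ne'] at h2
    rw [hψ]; linarith
  have hψ1 : ∀ x, eval x ψ ≤ 1 := by
    intro x
    have := mul_nonneg (inv_nonneg.2 hB.le) (hW0 x)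
    rw [hψ]; linarith
  have hψlt : ∀ x, x ∉ Z → eval x ψ < 1 := by
    intro x hx
    have := mul_pos (inv_pos.2 hB) (hWp x hx)
    rw [hψ]; linarith
  have hψm : ∀ z ∈ Z, ∀ N : ℕ, 1 - ψ ^ N ∈ mz z ^ 3 := by
    intro z hz N
    have h1 : (1 : RPoly n) - ψ ∣ 1 ^ N - ψ ^ N := sub_dvd_pow_sub_pow 1 ψ N
    rw [one_pow] at h1
    refine Ideal.mem_of_dvd _ h1 ?_
    simp only [ψ, sub_sub_cancel]
    exact Ideal.mul_mem_left _ _ (hW z hz)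
  have hSK : ∀ x ∈ Kset E I c, 0 ≤ eval x S := by
    intro x hxK
    have h2 : ∑ j ∈ E, eval x (c j) * eval x (t j) = 0 := Finset.sum_eq_zero fun j hj => by rw [hxK.1 j hj, zero_mul]
    have h3 : 0 ≤ ∑ j ∈ I, eval x (c j) * eval x (r j) ^ 2 := Finset.sum_nonneg fun j hj => mul_nonneg (hxK.2 j hj) (sq_nonneg _)
    simp only [S, map_add, map_sum, map_mul, map_pow, h2]
    linarith
  have hPG : ∀ z ∈ Z, ∀ N : ℕ, PDat z (F - ψ ^ N * S) := by
    intro z hz N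
    refine (hP z hz).congr ?_
    have := Ideal.add_mem _ (hS z hz) (Ideal.mul_mem_right S _ (hψm z hz N))
    convert this using 1
    ring
  have hnear : ∀ z ∈ Z, ∃ U : Set (Fin n → ℝ), IsOpen U ∧ z ∈ U ∧ ∀ x ∈ U, x ≠ z → 0 < eval x (F - S) := by
    intro z hz
    have := (hPG z hz 0).pos_near
    simp only [pow_zero, one_mul] at this
    obtain ⟨U, h1, h2, h3⟩ := eventually_nhds_iff.1 this
    exact ⟨U, h2, h3, h1⟩
  choose! U hUo hUz hUp using hnear
  have hK' : IsCompact (Kset E I c \ ⋃ z ∈ Z, U z) := hK.diff (isOpen_biUnion fun z hz => hUo z hz)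
  have hnZ : ∀ x ∈ Kset E I c \ ⋃ z ∈ Z, U z, x ∉ Z := by
    intro x hx hxZ
    exact hx.2 (Set.mem_biUnion (show x ∈ (Z : Set _) from hxZ) (hUz x hxZ))
  obtain ⟨N, hN⟩ : ∃ N : ℕ, ∀ x ∈ Kset E I c \ ⋃ z ∈ Z, U z, 0 < eval x F - eval x ψ ^ (2 * N) * eval x S := by
    rcases (Kset E I c \ ⋃ z ∈ Z, U z).eq_empty_or_nonempty with h | h
    · exact ⟨0, by simp [h]⟩
    · obtain ⟨x1, hx1, hm1⟩ := hK'.exists_isMinOn h (MvPolynomial.continuous_eval F).continuousOn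
      obtain ⟨x2, hx2, hm2⟩ := hK'.exists_isMaxOn h (MvPolynomial.continuous_eval ψ).continuousOn
      have hd : 0 < eval x1 F := (hF x1 hx1.1).lt_of_ne fun e => hnZ x1 hx1 ((hZ x1).2 ⟨hx1.1, e.symm⟩)
      have hq := hψlt x2 (hnZ x2 hx2)
      have hq0 := hψ0 x2 hx2.1
      obtain ⟨N, hN⟩ := exists_pow_lt_of_lt_one (show 0 < eval x1 F / B' by positivity) hq
      refine ⟨N, fun x hx => ?_⟩
      have h1 : eval x1 F ≤ eval x F := hm1 hx
      have h2 : eval x ψ ≤ eval x2 ψ := hm2 hx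
      have h3 : eval x ψ ^ (2 * N) ≤ eval x2 ψ ^ N := by
        refine (pow_le_pow_of_le_one (hψ0 x hx.1) (hψ1 x) (show N ≤ 2 * N by omega)).trans ?_
        exact pow_le_pow_left₀ (hψ0 x hx.1) h2 N
      have h4 := (abs_le.1 (hB2' x hx.1)).2
      have h5 : eval x ψ ^ (2 * N) * eval x S ≤ eval x2 ψ ^ N * B' :=
        mul_le_mul h3 h4 (hSK x hx.1) (by positivity)
      have h6 : eval x2 ψ ^ N * B' < eval x1 F := by rwa [lt_div_iff₀ hB'] at hN
      linarith
  refine ⟨F - ψ ^ (2 * N) * S, fun z hz => hPG z hz _, fun x hx hxZ => ?_, ?_⟩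
  · rw [map_sub, map_mul, map_pow]
    by_cases hxU : x ∈ ⋃ z ∈ Z, U z
    · obtain ⟨z, hz, hxz⟩ := Set.mem_iUnion₂.1 hxU
      have h1 := hUp z hz x hxz (by rintro rfl; exact hxZ hz)
      rw [map_sub] at h1
      have h2 : eval x ψ ^ (2 * N) ≤ 1 := pow_le_one₀ (hψ0 x hx) (hψ1 x)
      nlinarith [mul_le_mul_of_nonneg_right h2 (hSK x hx)]
    · exact hN x ⟨hx, hxU⟩
  · rw [sub_sub_cancel]
    have e : ψ ^ (2 * N) * S = ∑ j ∈ I, c j * (ψ ^ N * r j) ^ 2 + ∑ j ∈ E, c j * (ψ ^ (2 * N) * t j) := by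
      simp only [S, mul_add, Finset.mul_sum]
      congr 1
      · exact Finset.sum_congr rfl fun j _ => by ring
      · exact Finset.sum_congr rfl fun j _ => by ring
    rw [e]
    exact .add _ _ (Qm.sum _ _ fun j hj => .ineq j hj _) (Qm.sum _ _ fun j hj => .eqn j hj _)
end
end PartA8


section PartA9
open MvPolynomial
set_option linter.unusedSimpArgs false
section
variable {n : ℕ}

noncomputable def JZ (Z : Finset (Fin n → ℝ)) : Ideal (RPoly n) := ⨅ z ∈ Z, mz z

theorem mem_JZ {Z : Finset (Fin n → ℝ)} {p : RPoly n} : p ∈ JZ Z ↔ ∀ z ∈ Z, eval z p = 0 := by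
  simp [JZ, Submodule.mem_iInf, mem_mz]

theorem interp (Z : Finset (Fin n → ℝ)) : ∃ e : (Fin n → ℝ) → RPoly n,
    ∀ z ∈ Z, ∀ z' ∈ Z, eval z' (e z) = if z' = z then 1 else 0 := by
  classical
  choose e he using fun z => crt Z 1 (fun z' => if z' = z then 1 else 0)
  refine ⟨e, fun z _ z' hz' => ?_⟩
  have := he z z' hz'
  rw [pow_one, mem_mz, map_sub] at this
  rw [sub_eq_zero.1 this]
  split_ifs <;> simp

theorem PDat.mem_sq {z : Fin n → ℝ} {p : RPoly n} (hp : PDat z p) : p ∈ mz z * mz z := by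
  obtain ⟨η, hη, m, B, hB⟩ := hp
  rw [← pow_two]
  have h1 := Ideal.pow_le_pow_right (show 2 ≤ 3 by norm_num) hB
  have h2 : C η * ∑ i, Yv z i ^ 2 + ∑ l, (∑ i, C (B l i) * Yv z i) ^ 2 ∈ mz z ^ 2 := by
    refine Ideal.add_mem _ (Ideal.mul_mem_left _ _ (Ideal.sum_mem _ fun i _ => Ideal.pow_mem_pow (Yv_mem z i) 2)) ?_
    refine Ideal.sum_mem _ fun l _ => Ideal.pow_mem_pow (Ideal.sum_mem _ fun i _ => Ideal.mul_mem_left _ _ (Yv_mem z i)) 2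
  have := Ideal.add_mem _ h1 h2
  rwa [sub_add_cancel] at this

theorem mul_mem_JZ {Z : Finset (Fin n → ℝ)} {e : (Fin n → ℝ) → RPoly n}
    (he : ∀ z ∈ Z, ∀ z' ∈ Z, eval z' (e z) = if z' = z then 1 else 0) {z : Fin n → ℝ} (hz : z ∈ Z)
    {p : RPoly n} (hp : p ∈ mz z) : e z * p ∈ JZ Z := by
  rw [mem_JZ]
  intro z' hz'
  rw [map_mul, he z hz z' hz']
  split_ifs with h
  · subst h; rw [mem_mz.1 hp, mul_zero]
  · rw [zero_mul]

theorem sq_mul_mem_JZ {Z : Finset (Fin n → ℝ)} {e : (Fin n → ℝ) → RPoly n}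
    (he : ∀ z ∈ Z, ∀ z' ∈ Z, eval z' (e z) = if z' = z then 1 else 0) {z : Fin n → ℝ} (hz : z ∈ Z)
    {p : RPoly n} (hp : p ∈ mz z * mz z) : e z ^ 2 * p ∈ JZ Z * JZ Z := by
  induction hp using Submodule.mul_induction_on' with
  | mem_mul_mem a ha b hb =>
    have := Ideal.mul_mem_mul (mul_mem_JZ he hz ha) (mul_mem_JZ he hz hb)
    convert this using 1; ring
  | add x _ y _ h1 h2 => rw [mul_add]; exact Ideal.add_mem _ h1 h2

theorem G_mem {Z : Finset (Fin n → ℝ)} {G : RPoly n} (hG : ∀ z ∈ Z, G ∈ mz z * mz z) : G ∈ JZ Z * JZ Z := by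
  obtain ⟨e, he⟩ := interp Z
  have h1 : 1 - ∑ z ∈ Z, e z ^ 2 ∈ JZ Z := by
    rw [mem_JZ]
    intro z hz
    simp only [map_sub, map_one, map_sum, map_pow]
    rw [Finset.sum_eq_single z]
    · rw [he z hz z hz]; simp
    · intro z' hz' hne
      rw [he z' hz' z hz, if_neg (Ne.symm hne)]; simp
    · exact fun h => absurd hz h
  have h2 : G ∈ JZ Z := by
    rw [mem_JZ]
    intro z hz
    exact mem_mz.1 (Ideal.mul_le_left (hG z hz))
  have h3 := Ideal.add_mem _ (Ideal.mul_mem_mul h2 h1) (Ideal.sum_mem (JZ Z * JZ Z) fun z hz => sq_mul_mem_JZ he hz (hG z hz))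
  convert h3 using 1
  rw [← Finset.sum_mul]
  ring

theorem state_pos {E I : Finset ℕ} {c : ℕ → RPoly n} {Z : Finset (Fin n → ℝ)} {G : RPoly n}
    (hG1 : ∀ z ∈ Z, PDat z G) (hG2 : ∀ x ∈ Kset E I c, x ∉ Z → 0 < eval x G)
    {r : ℕ} (s : Fin r → RPoly n) (hs : ∀ k, s k ∈ JZ Z)
    (L : RPoly n →ₗ[ℝ] ℝ) (x : Fin n → ℝ)
    (hnn : ∀ p ∈ JZ Z * JZ Z, Qm E I c p → 0 ≤ L p) (hu : L (∑ k, s k ^ 2) = 1)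
    (hmul : ∀ f, ∀ p ∈ JZ Z * JZ Z, L (f * p) = eval x f * L p) : 0 < L G := by
  have hG := G_mem fun z hz => (hG1 z hz).mem_sq
  have huV : ∑ k, s k ^ 2 ∈ JZ Z * JZ Z := Ideal.sum_mem _ fun k _ => by
    rw [pow_two]; exact Ideal.mul_mem_mul (hs k) (hs k)
  have hqu : ∀ f, (∀ k, Qm E I c (f * s k ^ 2)) → 0 ≤ eval x f := by
    intro f hf
    have h1 := hnn (f * ∑ k, s k ^ 2) (Ideal.mul_mem_left _ _ huV) (by rw [Finset.mul_sum]; exact Qm.sum _ _ fun k _ => hf k)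
    rwa [hmul _ _ huV, hu, mul_one] at h1
  have hxK : x ∈ Kset E I c := by
    refine ⟨fun j hj => ?_, fun j hj => ?_⟩
    · have h1 := hqu (c j) fun k => .eqn j hj _
      have h2 := hqu (-c j) fun k => by
        have := Qm.eqn (I := I) (c := c) j hj (-s k ^ 2)
        convert this using 1; ring
      rw [map_neg] at h2
      linarith
    · exact hqu (c j) fun k => .ineq j hj _
  by_cases hxZ : x ∈ Z
  · obtain ⟨e, he⟩ := interp Z
    have hex : eval x (e x) = 1 := by rw [he x hxZ x hxZ, if_pos rfl]
    have hJ2 : ∀ a ∈ JZ Z, ∀ b ∈ JZ Z, a * b ∈ JZ Z * JZ Z := fun a ha b hb => Ideal.mul_mem_mul ha hb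
    have hsq : ∀ a ∈ JZ Z, 0 ≤ L (a ^ 2) := fun a ha => hnn _ (by rw [pow_two]; exact hJ2 a ha a ha) (.sq a)
    have hee : ∀ p ∈ JZ Z * JZ Z, L (e x ^ 2 * p) = L p := by
      intro p hp
      rw [hmul _ p hp, map_pow, hex]; ring
    let y : Fin n → RPoly n := fun i => e x * Yv x i
    have hy : ∀ i, y i ∈ JZ Z := fun i => mul_mem_JZ he hxZ (Yv_mem x i)
    have hpos : 0 < ∑ i, L (y i ^ 2) := by
      refine (Finset.sum_nonneg fun i _ => hsq _ (hy i)).lt_of_ne fun h0 => ?_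
      have h1 := (Finset.sum_eq_zero_iff_of_nonneg (fun i _ => hsq _ (hy i))).1 h0.symm
      have h2 : ∀ i j, L (y i * y j) = 0 := by
        intro i j
        have e1 := hsq _ (Ideal.add_mem _ (hy i) (hy j))
        have e2 := hsq _ (Ideal.sub_mem _ (hy i) (hy j))
        have e3 : (y i + y j) ^ 2 = y i ^ 2 + y j ^ 2 + y i * y j + y i * y j := by ring
        have e4 : (y i - y j) ^ 2 = y i ^ 2 + y j ^ 2 - y i * y j - y i * y j := by ring
        rw [e3] at e1; rw [e4] at e2
        simp only [map_add, map_sub, h1 i (Finset.mem_univ i), h1 j (Finset.mem_univ j)] at e1 e2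
        linarith
      have h3 : ∀ a ∈ mz x, ∀ b ∈ mz x, L (e x ^ 2 * (a * b)) = 0 := by
        intro a ha b hb
        obtain ⟨q, rfl⟩ := hadamard0 ha
        obtain ⟨q', rfl⟩ := hadamard0 hb
        have : e x ^ 2 * ((∑ i, Yv x i * q i) * (∑ i, Yv x i * q' i)) = ∑ i, ∑ j, (q i * q' j) * (y i * y j) := by
          rw [Finset.sum_mul_sum, Finset.mul_sum]
          refine Finset.sum_congr rfl fun i _ => ?_
          rw [Finset.mul_sum]
          exact Finset.sum_congr rfl fun j _ => by simp only [y]; ring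
        rw [this]
        simp only [map_sum]
        refine Finset.sum_eq_zero fun i _ => Finset.sum_eq_zero fun j _ => ?_
        rw [hmul _ _ (hJ2 _ (hy i) _ (hy j)), h2, mul_zero]
      have h4 : L (∑ k, s k ^ 2) = 0 := by
        rw [← hee _ huV, Finset.mul_sum, map_sum]
        refine Finset.sum_eq_zero fun k _ => ?_
        have := mem_mz.2 (mem_JZ.1 (hs k) x hxZ)
        rw [pow_two (s k)]
        exact h3 _ this _ this
      rw [hu] at h4
      exact one_ne_zero h4
    obtain ⟨η, hη, m, B, hB⟩ := hG1 x hxZ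
    have hcub : ∀ p ∈ mz x ^ 3, L (e x ^ 2 * p) = 0 := by
      intro p hp
      rw [pow_succ', pow_two] at hp
      induction hp using Submodule.mul_induction_on' with
      | mem_mul_mem a ha b hb =>
        rw [show e x ^ 2 * (a * b) = a * (e x ^ 2 * b) by ring, hmul _ _ (sq_mul_mem_JZ he hxZ hb), mem_mz.1 ha, zero_mul]
      | add a _ b _ h1 h2 => rw [mul_add, map_add, h1, h2, add_zero]
    have h5 := hcub _ hB
    have h6 : e x ^ 2 * (G - (C η * ∑ i, Yv x i ^ 2 + ∑ l, (∑ i, C (B l i) * Yv x i) ^ 2)) =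
        e x ^ 2 * G - η • (∑ i, y i ^ 2) - ∑ l, (∑ i, C (B l i) * y i) ^ 2 := by
      have e1 : ∑ i, y i ^ 2 = e x ^ 2 * ∑ i, Yv x i ^ 2 := by
        rw [Finset.mul_sum]; exact Finset.sum_congr rfl fun i _ => by simp only [y]; ring
      have e2 : ∑ l, (∑ i, C (B l i) * y i) ^ 2 = e x ^ 2 * ∑ l, (∑ i, C (B l i) * Yv x i) ^ 2 := by
        rw [Finset.mul_sum]
        refine Finset.sum_congr rfl fun l _ => ?_
        rw [← mul_pow, Finset.mul_sum]
        congr 1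
        exact Finset.sum_congr rfl fun i _ => by simp only [y]; ring
      rw [e1, e2, MvPolynomial.smul_eq_C_mul]; ring
    rw [h6, map_sub, map_sub, map_smul, hee _ hG, map_sum, map_sum, smul_eq_mul] at h5
    have h7 : 0 ≤ ∑ l, L ((∑ i, C (B l i) * y i) ^ 2) := Finset.sum_nonneg fun l _ =>
      hsq _ (Ideal.sum_mem _ fun i _ => Ideal.mul_mem_left _ _ (hy i))
    have h8 := mul_pos hη hpos
    linarith
  · have h1 := hmul G _ huV
    have h2 := hmul (∑ k, s k ^ 2) G hG
    rw [mul_comm, h2, hu, mul_one] at h1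
    have h3 := hG2 x hxK hxZ
    rw [← h1] at h3
    refine pos_of_mul_pos_right h3 ?_
    simp only [map_sum, map_pow]
    exact Finset.sum_nonneg fun k _ => sq_nonneg _

theorem unit_sq {E I : Finset ℕ} {c : ℕ → RPoly n} {R : ℝ} (hR : Qm E I c (C R - ∑ i, X i ^ 2))
    {r : ℕ} (s : Fin r → RPoly n) {a : RPoly n} (ha : a ∈ Ideal.span (Set.range s)) :
    ∃ N : ℝ, 0 ≤ N ∧ Qm E I c (C N * (∑ k, s k ^ 2) - a ^ 2) := by
  induction ha using Submodule.span_induction with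
  | mem x hx =>
    obtain ⟨k, rfl⟩ := hx
    refine ⟨1, zero_le_one, ?_⟩
    rw [C_1, one_mul, ← Finset.add_sum_erase _ _ (Finset.mem_univ k), add_sub_cancel_left]
    exact Qm.sum _ _ fun j _ => .sq _
  | zero => exact ⟨0, le_rfl, by simpa using Qm.zero⟩
  | add x y _ _ h1 h2 =>
    obtain ⟨N, hN, h1⟩ := h1
    obtain ⟨N', hN', h2⟩ := h2
    refine ⟨2 * N + 2 * N', by positivity, ?_⟩
    have := Qm.add _ _ (Qm.add _ _ (h1.smulC (r := 2) (by norm_num)) (h2.smulC (r := 2) (by norm_num))) (.sq (x - y))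
    convert this using 1
    simp only [C_add, C_mul]
    rw [map_ofNat C 2]
    ring
  | smul f x _ h =>
    obtain ⟨N, hN, h⟩ := h
    obtain ⟨N', hN', h', -⟩ := Qm.bdd hR (f ^ 2)
    refine ⟨N' * N, by positivity, ?_⟩
    have := Qm.add _ _ (h.smulC hN'.le) (h'.mul_sq x)
    convert this using 1
    simp only [C_mul, smul_eq_mul]
    ring

theorem unit_mul {E I : Finset ℕ} {c : ℕ → RPoly n} {R : ℝ} (hR : Qm E I c (C R - ∑ i, X i ^ 2))
    {r : ℕ} (s : Fin r → RPoly n) {p : RPoly n} (hp : p ∈ Ideal.span (Set.range s) * Ideal.span (Set.range s)) :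
    ∃ N : ℝ, Qm E I c (C N * (∑ k, s k ^ 2) - p) := by
  induction hp using Submodule.mul_induction_on' with
  | mem_mul_mem a ha b hb =>
    obtain ⟨N, hN, h1⟩ := unit_sq hR s ha
    obtain ⟨N', hN', h2⟩ := unit_sq hR s hb
    refine ⟨1 / 2 * N + 1 / 2 * N', ?_⟩
    have := Qm.add _ _ (Qm.add _ _ (h1.smulC (r := 1 / 2) (by norm_num)) (h2.smulC (r := 1 / 2) (by norm_num)))
      ((Qm.sq (a - b)).smulC (r := 1 / 2) (by norm_num))
    convert this using 1
    have e1 : (C (1/2) : RPoly n) * 2 = 1 := by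
        rw [show (2 : RPoly n) = C 2 from (map_ofNat C 2).symm, ← C_mul]; norm_num
    simp only [C_add, C_mul]
    linear_combination (a * b) * e1
  | add x _ y _ h1 h2 =>
    obtain ⟨N, h1⟩ := h1
    obtain ⟨N', h2⟩ := h2
    refine ⟨N + N', ?_⟩
    have := Qm.add _ _ h1 h2
    convert this using 1
    rw [C_add]; ring

theorem cert {E I : Finset ℕ} {c : ℕ → RPoly n} {R : ℝ} (hR0 : 0 < R) (hR : Qm E I c (C R - ∑ i, X i ^ 2))
    {F : RPoly n} (hF : ∀ x ∈ Kset E I c, 0 ≤ eval x F)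
    (hopt : ∀ z ∈ Kset E I c, eval z F = 0 → OptCondsAt E c I c F z) :
    ∃ (Z : Finset (Fin n → ℝ)) (r : ℕ) (s : Fin r → RPoly n) (ε : ℝ), 0 < ε ∧
      Ideal.span (Set.range s) = JZ Z ∧ Qm E I c (F - C ε * ∑ k, s k ^ 2) := by
  have hK := K_compact hR
  have hfin := Z_finite hK hopt
  let Z := hfin.toFinset
  obtain ⟨G, hG1, hG2, hFG⟩ := globalize hK hF hopt Z (fun x => by simp [Z])
  obtain ⟨r, s, hs⟩ := Submodule.fg_iff_exists_fin_generating_family.1 ((isNoetherianRing_iff_ideal_fg _).1 inferInstance (JZ Z))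
  have hs : Ideal.span (Set.range s) = JZ Z := hs
  have hsm : ∀ k, s k ∈ JZ Z := fun k => hs ▸ Ideal.subset_span ⟨k, rfl⟩
  have huV : ∑ k, s k ^ 2 ∈ JZ Z * JZ Z := Ideal.sum_mem _ fun k _ => by
    rw [pow_two]; exact Ideal.mul_mem_mul (hsm k) (hsm k)
  have hG := G_mem fun z hz => (hG1 z hz).mem_sq
  obtain ⟨ε, hε, h⟩ := pure_state (V := JZ Z * JZ Z) (M := {p | Qm E I c p}) (u := ⟨_, huV⟩)
    (fun p hp q hq => Qm.add p q hp hq) Qm.zero (fun p hp q => Qm.mul_sq hp q) (by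
      intro p
      obtain ⟨N, hN⟩ := unit_mul hR s (p := p.1) (by rw [hs]; exact p.2)
      refine ⟨N, ?_⟩
      convert hN using 1
      simp [MvPolynomial.smul_eq_C_mul]) (show Qm E I c (∑ k, s k ^ 2) from Qm.sum _ _ fun k _ => .sq _) R hR0 (by
      intro i q
      have := Qm.sum (E := E) (I := I) (c := c) Finset.univ (fun k => (q * s k) ^ 2 * (C R - X i ^ 2)) (fun k _ => (hR.arch_i i).mul_sq _)
      show Qm E I c _
      convert this using 1
      simp only [Finset.mul_sum]
      exact Finset.sum_congr rfl fun k _ => by ring) ⟨G, hG⟩ (by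
      intro L z h1 h2 h3
      obtain ⟨L', hL'⟩ := LinearMap.exists_extend (p := (JZ Z * JZ Z).restrictScalars ℝ) L
      have hL : ∀ p (hp : p ∈ JZ Z * JZ Z), L' p = L ⟨p, hp⟩ := by
        intro p hp
        exact LinearMap.congr_fun hL' ⟨p, hp⟩
      rw [← hL]
      refine state_pos hG1 hG2 s hsm L' z ?_ ?_ ?_
      · intro p hp hq; rw [hL p hp]; exact h1 _ hq
      · rw [hL _ huV]; exact h2
      · intro f p hp
        rw [hL _ (Ideal.mul_mem_left _ f hp), hL p hp, ← h3]
        rfl)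
  refine ⟨Z, r, s, ε, hε, hs, ?_⟩
  have h' : Qm E I c (G - C ε * ∑ k, s k ^ 2) := by
    have : Qm E I c _ := h
    convert this using 1
    simp [MvPolynomial.smul_eq_C_mul]
  have := Qm.add _ _ hFG h'
  convert this using 1
  ring
end
end PartA9


section PartA10
open MvPolynomial
section
variable {n : ℕ}

theorem cs_zero {E I : Finset ℕ} {c : ℕ → RPoly n} {k : ℕ} {w : (Fin n →₀ ℕ) → ℝ}
    (hw : MomRelaxPSD E c I c k w) {s q : RPoly n} (hs : s.totalDegree ≤ k) (hq : q.totalDegree ≤ k)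
    (h0 : pl w (s ^ 2) = 0) : pl w (q * s) = 0 := by
  have h : ∀ t : ℝ, 0 ≤ pl w (q ^ 2) + 2 * t * pl w (q * s) := by
    intro t
    have h1 := hw.2.2 (q + C t * s) ((totalDegree_add _ _).trans (max_le hq
      ((totalDegree_mul _ _).trans (by simpa using hs))))
    rw [pairing_eq] at h1
    have e : (q + C t * s) ^ 2 = q ^ 2 + (2 * t) • (q * s) + (t ^ 2) • s ^ 2 := by
      simp only [MvPolynomial.smul_eq_C_mul, C_mul, C_pow, map_ofNat]
      ring
    rw [e, map_add, map_add, map_smul, map_smul, h0] at h1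
    simpa using h1
  by_contra hB
  have := h (-(pl w (q ^ 2) + 1) / (2 * pl w (q * s)))
  have e : 2 * (-(pl w (q ^ 2) + 1) / (2 * pl w (q * s))) * pl w (q * s) = -(pl w (q ^ 2) + 1) := by
    field_simp
  rw [e] at this
  linarith

theorem ideal_van {E I : Finset ℕ} {c : ℕ → RPoly n} (P : ℕ → ((Fin n →₀ ℕ) → ℝ) → Prop)
    (hP : ∀ k w, P k w → MomRelaxPSD E c I c k w) {r : ℕ} (s : Fin r → RPoly n) {k0 : ℕ}
    (hs : ∀ l, ∀ k, k0 ≤ k → ∀ w, P k w → pl w (s l ^ 2) = 0)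
    {p : RPoly n} (hp : p ∈ Ideal.span (Set.range s)) :
    ∃ k1 : ℕ, ∀ k, k1 ≤ k → ∀ w, P k w → pl w p = 0 := by
  obtain ⟨q, rfl⟩ := Ideal.mem_span_range_iff_exists_fun.1 hp
  refine ⟨k0 + ∑ l, ((q l).totalDegree + (s l).totalDegree), fun k hk w hw => ?_⟩
  rw [map_sum]
  refine Finset.sum_eq_zero fun l _ => ?_
  have := Finset.single_le_sum (f := fun l => (q l).totalDegree + (s l).totalDegree)
    (fun _ _ => Nat.zero_le _) (Finset.mem_univ l)
  exact cs_zero (hP k w hw) (by omega) (by omega) (hs l k (by omega) w hw)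

theorem mdeg_le {p : RPoly n} {β : Fin n →₀ ℕ} (hβ : β ∈ p.support) : mdeg β ≤ p.totalDegree := by
  refine le_trans (le_of_eq ?_) (le_totalDegree hβ)
  rw [mdeg, Finsupp.sum_fintype _ _ (fun _ => rfl)]

theorem sum_deg {p : RPoly n} {t : ℕ} (h : p.totalDegree ≤ t) :
    p = ∑ β : {α : Fin n →₀ ℕ // mdeg α ≤ t}, p.coeff β.1 • monomial β.1 (1 : ℝ) := by
  classical
  ext γ
  simp only [coeff_sum, coeff_smul, coeff_monomial, smul_eq_mul, mul_ite, mul_one, mul_zero]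
  by_cases hγ : mdeg γ ≤ t
  · rw [Finset.sum_eq_single ⟨γ, hγ⟩]
    · simp
    · intro β _ hβ
      rw [if_neg]
      intro e
      exact hβ (Subtype.ext e)
    · simp
  · rw [Finset.sum_eq_zero]
    · by_contra hc
      exact hγ ((mdeg_le (mem_support_iff.2 hc)).trans h)
    · intro β _
      rw [if_neg]
      intro e
      exact hγ (e ▸ β.2)

theorem flat_of {w : (Fin n →₀ ℕ) → ℝ} {t t' : ℕ} (htt : t' ≤ t)
    (N : (Fin n →₀ ℕ) → RPoly n) (hN : ∀ α, (N α).totalDegree ≤ t')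
    (h : ∀ α β : Fin n →₀ ℕ, mdeg α ≤ t → mdeg β ≤ t → w (α + β) = pl w (N α * N β)) :
    (momentMatrix t' w).rank = (momentMatrix t w).rank := by
  apply le_antisymm
  · have : momentMatrix t' w = (momentMatrix t w).submatrix (fun α => ⟨α.1, α.2.trans htt⟩) (fun α => ⟨α.1, α.2.trans htt⟩) := rfl
    rw [this]
    exact Matrix.rank_submatrix_le _ _ _
  · let Cm : Matrix {α : Fin n →₀ ℕ // mdeg α ≤ t'} {α : Fin n →₀ ℕ // mdeg α ≤ t} ℝ :=
      fun β α => (N α.1).coeff β.1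
    have : momentMatrix t w = Cm.transpose * momentMatrix t' w * Cm := by
      ext α β
      show w (α.1 + β.1) = _
      rw [h _ _ α.2 β.2]
      conv_lhs => rw [sum_deg (hN α.1), sum_deg (hN β.1), Finset.sum_mul_sum]
      rw [Matrix.mul_apply]
      simp only [Matrix.mul_apply, Matrix.transpose_apply, map_sum, smul_mul_smul_comm, monomial_mul, one_mul, map_smul,
        pl_mon, smul_eq_mul]
      rw [Finset.sum_comm]
      refine Finset.sum_congr rfl fun x _ => ?_
      rw [Finset.sum_mul]
      refine Finset.sum_congr rfl fun y _ => ?_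
      show (N α.1).coeff y.1 * (N β.1).coeff x.1 * w (y.1 + x.1) = (N α.1).coeff y.1 * w (y.1 + x.1) * (N β.1).coeff x.1
      ring
    rw [this]
    exact (Matrix.rank_mul_le_left _ _).trans (Matrix.rank_mul_le_right _ _)

theorem flat_trunc (P : ℕ → ((Fin n →₀ ℕ) → ℝ) → Prop)
    {Z : Finset (Fin n → ℝ)}
    (hP : ∀ p ∈ JZ Z, ∃ k1 : ℕ, ∀ k, k1 ≤ k → ∀ w, P k w → pl w p = 0) (d0 dK : ℕ) :
    ∃ k1 : ℕ, ∀ k, k1 ≤ k → ∀ w, P k w → HasFlatTruncation d0 dK k w := by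
  classical
  obtain ⟨e, he⟩ := interp Z
  let D := Z.sup fun z => (e z).totalDegree
  let t := d0 + dK + D
  let N : (Fin n →₀ ℕ) → RPoly n := fun α => ∑ z ∈ Z, eval z (monomial α (1 : ℝ)) • e z
  have hN : ∀ α, (N α).totalDegree ≤ t - dK := by
    intro α
    refine totalDegree_finsetSum_le fun z hz => (totalDegree_smul_le _ _).trans ?_
    have : (e z).totalDegree ≤ D := Finset.le_sup (f := fun z => (e z).totalDegree) hz
    omega
  have hev : ∀ α, ∀ z ∈ Z, eval z (N α) = eval z (monomial α (1 : ℝ)) := by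
    intro α z hz
    simp only [N, map_sum, smul_eval]
    rw [Finset.sum_eq_single z]
    · rw [he z hz z hz]; simp
    · intro z' hz' hne
      rw [he z' hz' z hz, if_neg (Ne.symm hne), mul_zero]
    · exact fun h => absurd hz h
  have hmem : ∀ α β, monomial (α + β) (1 : ℝ) - N α * N β ∈ JZ Z := by
    intro α β
    rw [mem_JZ]
    intro z hz
    rw [map_sub, map_mul, hev α z hz, hev β z hz, ← map_mul, monomial_mul, one_mul, sub_self]
  choose κ hκ using fun α β => hP _ (hmem α β)
  let S := {α : Fin n →₀ ℕ // mdeg α ≤ t}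
  refine ⟨t + ∑ α : S, ∑ β : S, κ α.1 β.1, fun k hk w hw => ⟨t, by omega, by omega, ?_⟩⟩
  refine flat_of (by omega) N hN fun α β hα hβ => ?_
  have h1 := Finset.single_le_sum (f := fun β : S => κ α β.1)
    (fun _ _ => Nat.zero_le _) (Finset.mem_univ (⟨β, hβ⟩ : S))
  have h2 := Finset.single_le_sum (f := fun α : S => ∑ β : S, κ α.1 β.1)
    (fun _ _ => Nat.zero_le _) (Finset.mem_univ (⟨α, hα⟩ : S))
  simp only at h1 h2
  have := hκ α β k (by omega) w hw
  rw [map_sub, pl_mon] at this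
  linarith
end
end PartA10

/-- Theorem 3.2(ii): under archimedeanness, Assumption A, and the
optimality conditions at every global minimizer of (Q), for all sufficiently large `k`
every minimizer of the `k`th moment relaxation has a flat truncation. -/
theorem statement_1
    (n m m1 d : ℕ) (hm1 : m1 ≤ m)
    (f : RPoly n) (a : Fin m → RPoly n) (b : Fin m → ℝ)
    (E I : Finset ℕ) (hEI : Disjoint E I) (c : ℕ → RPoly n)
    (hf : f.totalDegree ≤ d) (ha : ∀ i, (a i).totalDegree ≤ d)
    -- archimedeanness of Ideal(c_eq) + QM(c_in)
    (harch : ArchimedeanQM E I c)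
    -- Assumption A: θ* is a maximizer of (P)
    (θs : Fin m → ℝ) (hθfeas : PFeas m1 d f a (Kset E I c) θs)
    (hθmax : ∀ θ : Fin m → ℝ, PFeas m1 d f a (Kset E I c) θ →
      (∑ i, b i * θ i) ≤ ∑ i, b i * θs i)
    -- Assumption A: (M) has a minimizer y* ≠ 0
    (ys : (Fin n →₀ ℕ) → ℝ) (hyfeas : MFeas m1 d a b (Kset E I c) ys)
    (hymin : ∀ y : (Fin n →₀ ℕ) → ℝ, MFeas m1 d a b (Kset E I c) y →
      pairing f ys ≤ pairing f y)
    (hynz : ∃ α : Fin n →₀ ℕ, mdeg α ≤ d ∧ ys α ≠ 0)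
    -- Assumption A: Slater condition for (P)
    (hslater : ∃ θ : Fin m → ℝ, (∀ i : Fin m, m1 ≤ (i : ℕ) → 0 ≤ θ i) ∧
      (f - ∑ i, C (θ i) * a i) ∈ PdInterior d (Kset E I c))
    -- LICQC, SCC, SOSC at every global minimizer of (Q)
    (hopt : ∀ u : Fin n → ℝ,
      (u ∈ Kset E I c ∧ ∀ x ∈ Kset E I c,
        eval u (f - ∑ i, C (θs i) * a i) ≤ eval x (f - ∑ i, C (θs i) * a i)) →
      OptCondsAt E c I c (f - ∑ i, C (θs i) * a i) u) :
    ∃ k1 : ℕ, ∀ k : ℕ, k1 ≤ k →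
      ∀ w : (Fin n →₀ ℕ) → ℝ,
        GMomFeas m1 a b E c I c k w →
        (∀ w' : (Fin n →₀ ℕ) → ℝ, GMomFeas m1 a b E c I c k w' →
          pairing f w ≤ pairing f w') →
        HasFlatTruncation (d0GMP f a E I c) (dKOrig E I c) k w := by
  obtain ⟨R, hR0, hR⟩ := Qm.arch harch
  obtain ⟨Z, r, s, ε, hε, hs, hQ⟩ := cert hR0 hR (F := f - ∑ i, C (θs i) * a i) hθfeas.2.2
    (fun z hz h0 => hopt z ⟨hz, fun x hx => by rw [h0]; exact hθfeas.2.2 x hx⟩)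
  obtain ⟨k0, hk0⟩ := hQ.pl_nonneg
  let P : ℕ → ((Fin n →₀ ℕ) → ℝ) → Prop := fun k w => GMomFeas m1 a b E c I c k w ∧
    ∀ w' : (Fin n →₀ ℕ) → ℝ, GMomFeas m1 a b E c I c k w' → pairing f w ≤ pairing f w'
  have hsq : ∀ l, ∀ k, k0 + ∑ l, (s l).totalDegree ≤ k → ∀ w, P k w → pl w (s l ^ 2) = 0 := by
    intro l k hk w hw
    have hd : ∀ l, (s l).totalDegree ≤ ∑ l, (s l).totalDegree := fun l =>
      Finset.single_le_sum (f := fun l => (s l).totalDegree) (fun _ _ => Nat.zero_le _) (Finset.mem_univ l)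
    have hnn : ∀ l, 0 ≤ pl w (s l ^ 2) := by
      intro l
      rw [← pairing_eq]
      exact hw.1.2.2.2.2 (s l) (by have := hd l; omega)
    have h1 := min_le (K_compact hR) hf ha θs hθfeas hθmax hslater k w hw.1 hw.2
    have h2 := hk0 k (by omega) w hw.1.2.2
    rw [map_sub, ← MvPolynomial.smul_eq_C_mul, map_smul, smul_eq_mul, map_sum] at h2
    have h3 := Finset.single_le_sum (f := fun l => pl w (s l ^ 2)) (fun l _ => hnn l) (Finset.mem_univ l)
    have h4 : ε * pl w (s l ^ 2) ≤ ε * ∑ l, pl w (s l ^ 2) := mul_le_mul_of_nonneg_left h3 hε.le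
    have h5 : ε * pl w (s l ^ 2) ≤ 0 := by linarith
    exact le_antisymm (nonpos_of_mul_nonpos_right h5 hε) (hnn l)
  obtain ⟨k1, hk1⟩ := flat_trunc P (Z := Z) (fun p hp => ideal_van (E := E) (I := I) (c := c) P
    (fun k w hw => hw.1.2.2) s hsq (by rw [hs]; exact hp)) (d0GMP f a E I c) (dKOrig E I c)
  exact ⟨k1, fun k hk w hw hmin => hk1 k hk w ⟨hw, hmin⟩⟩
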